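/- arXiv:1412.7986 — 2 statements merged into one kernel-verified Lean document; each statement's English description precedes it below -/
import Mathlib

section
/- For every γ ∈ (0,1) there exists a potential q* ∈ A_γ such that λ₁(q*) = m_γ; that is, the infimum m_γ of the first eigenvalues λ₁(q) over q ∈ A_γ is attained. -/
open MeasureTheory Set Real

noncomputable section

/-- Pairs `(y, y')` representing a function of Sobolev class `W¹₂[0,1]`:
`y` is absolutely continuous on `[0,1]` (being an integral of `y'`)
with derivative `y'` belonging to `L²[0,1]`. -/
def W12 : Set ((ℝ → ℝ) × (ℝ → ℝ)) :=
  {p | (∀ x ∈ Icc (0:ℝ) 1, p.1 x = p.1 0 + ∫ t in (0:ℝ)..x, p.2 t) ∧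
    IntervalIntegrable p.2 volume 0 1 ∧
    IntervalIntegrable (fun t => (p.2 t) ^ 2) volume 0 1}

/-- The Rayleigh quotient `(∫₀¹ ((y')² + q y²) dx) / (∫₀¹ y² dx)`. -/
def Rayleigh (q : ℝ → ℝ) (p : (ℝ → ℝ) × (ℝ → ℝ)) : ℝ :=
  (∫ t in (0:ℝ)..1, ((p.2 t) ^ 2 + q t * (p.1 t) ^ 2)) /
    ∫ t in (0:ℝ)..1, (p.1 t) ^ 2

/-- The smallest eigenvalue `λ₁(q)` of the Neumann problem `-y'' + q y = λ y`,
`y'(0) = y'(1) = 0`, defined as the infimum of Rayleigh quotients over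
nonzero `y ∈ W¹₂[0,1]`. -/
def lambda1 (q : ℝ → ℝ) : ℝ :=
  sInf {r | ∃ p ∈ W12, 0 < (∫ t in (0:ℝ)..1, (p.1 t) ^ 2) ∧ r = Rayleigh q p}

/-- The class `A_γ` of potentials: `q ∈ L¹[0,1]`, `q ≥ 0` a.e. on `[0,1]`,
`∫₀¹ q^γ dx = 1`. -/
def Agamma (γ : ℝ) : Set (ℝ → ℝ) :=
  {q | IntervalIntegrable q volume 0 1 ∧
    (∀ᵐ t ∂(volume.restrict (Icc (0:ℝ) 1)), 0 ≤ q t) ∧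
    (∫ t in (0:ℝ)..1, q t ^ γ) = 1}

/-- `m_γ := inf_{q ∈ A_γ} λ₁(q)`. -/
def mGamma (γ : ℝ) : ℝ := sInf (lambda1 '' Agamma γ)

/-- The set `M` of uniformly positive functions of class `W¹₂[0,1]`. -/
def Mset : Set ((ℝ → ℝ) × (ℝ → ℝ)) :=
  {p ∈ W12 | ∃ ζ > (0:ℝ), ∀ x ∈ Icc (0:ℝ) 1, ζ ≤ p.1 x}

/-- `J_γ(y) := ∫₀¹ (y')² dx + (∫₀¹ y^{2γ/(γ−1)} dx)^{(γ−1)/γ}`. -/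
def Jg (γ : ℝ) (p : (ℝ → ℝ) × (ℝ → ℝ)) : ℝ :=
  (∫ t in (0:ℝ)..1, (p.2 t) ^ 2) +
    (∫ t in (0:ℝ)..1, (p.1 t) ^ (2 * γ / (γ - 1))) ^ ((γ - 1) / γ)

/-- `G_γ(y) := J_γ(y) / ∫₀¹ y² dx`. -/
def Gg (γ : ℝ) (p : (ℝ → ℝ) × (ℝ → ℝ)) : ℝ :=
  Jg γ p / ∫ t in (0:ℝ)..1, (p.1 t) ^ 2

lemma sq_integral_le_mul_integral_sq {g : ℝ → ℝ} {a b : ℝ} (hab : a ≤ b)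
    (h1 : IntervalIntegrable g volume a b)
    (h2 : IntervalIntegrable (fun t => (g t) ^ 2) volume a b) :
    (∫ t in a..b, g t) ^ 2 ≤ (b - a) * ∫ t in a..b, (g t) ^ 2 := by
  rcases hab.eq_or_lt with rfl | hlt
  · simp
  set J := ∫ t in a..b, g t with hJ
  have h0 : 0 ≤ ∫ t in a..b, ((b - a) * g t - J) ^ 2 :=
    intervalIntegral.integral_nonneg hab fun t _ => sq_nonneg _
  have h3 : (∫ t in a..b, ((b - a) * g t - J) ^ 2)
      = (b - a) ^ 2 * (∫ t in a..b, (g t) ^ 2) - 2 * (b - a) * J * J + (b - a) * J ^ 2 := by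
    have : (fun t => ((b - a) * g t - J) ^ 2)
        = fun t => ((b - a) ^ 2 * (g t) ^ 2 - 2 * (b - a) * J * g t) + J ^ 2 := by
      funext t; ring
    rw [this, intervalIntegral.integral_add ((h2.const_mul _).sub (h1.const_mul _))
      intervalIntegrable_const, intervalIntegral.integral_sub (h2.const_mul _) (h1.const_mul _),
      intervalIntegral.integral_const_mul, intervalIntegral.integral_const_mul,
      intervalIntegral.integral_const, ← hJ, smul_eq_mul]
  rw [h3] at h0
  have hpos : 0 < b - a := sub_pos.2 hlt
  have : 0 ≤ (b - a) * ((b - a) * (∫ t in a..b, (g t) ^ 2) - J ^ 2) := by nlinarith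
  have := nonneg_of_mul_nonneg_right this hpos
  linarith

lemma IntervalIntegrable.mono_unitInterval {g : ℝ → ℝ} (h : IntervalIntegrable g volume 0 1)
    {a b : ℝ} (ha : a ∈ Icc (0:ℝ) 1) (hb : b ∈ Icc (0:ℝ) 1) :
    IntervalIntegrable g volume a b :=
  h.mono_set (by
    rw [uIcc_of_le zero_le_one]
    exact uIcc_subset_Icc ha hb)

namespace W12

variable {p r : (ℝ → ℝ) × (ℝ → ℝ)}

lemma sub_eq_integral (hp : p ∈ W12) {a b : ℝ} (ha : a ∈ Icc (0:ℝ) 1) (hb : b ∈ Icc (0:ℝ) 1) :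
    p.1 b - p.1 a = ∫ t in a..b, p.2 t := by
  have h0 : (0:ℝ) ∈ Icc (0:ℝ) 1 := by simp
  rw [hp.1 b hb, hp.1 a ha, ← intervalIntegral.integral_interval_sub_left
    (hp.2.1.mono_unitInterval h0 hb) (hp.2.1.mono_unitInterval h0 ha)]
  ring

lemma continuousOn (hp : p ∈ W12) : ContinuousOn p.1 (Icc 0 1) := by
  have h : ContinuousOn (fun x => p.1 0 + ∫ t in (0:ℝ)..x, p.2 t) (Icc 0 1) := by
    refine continuousOn_const.add ?_
    have := intervalIntegral.continuousOn_primitive_interval' hp.2.1 (a := 0) (by simp)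
    rwa [uIcc_of_le zero_le_one] at this
  exact h.congr hp.1

lemma intervalIntegrable_sq_fst (hp : p ∈ W12) :
    IntervalIntegrable (fun t => (p.1 t) ^ 2) volume 0 1 :=
  ((continuousOn hp).pow 2).intervalIntegrable_of_Icc zero_le_one

lemma memLp_snd (hp : p ∈ W12) : MemLp p.2 2 (volume.restrict (Ioc (0:ℝ) 1)) := by
  have h1 := (intervalIntegrable_iff_integrableOn_Ioc_of_le zero_le_one).1 hp.2.1
  have h2 := (intervalIntegrable_iff_integrableOn_Ioc_of_le zero_le_one).1 hp.2.2
  exact (memLp_two_iff_integrable_sq h1.aestronglyMeasurable).2 h2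

lemma mem_of_memLp {z : ℝ → ℝ} (hz : MemLp z 2 (volume.restrict (Ioc (0:ℝ) 1))) (c : ℝ) :
    ((fun x => c + ∫ t in (0:ℝ)..x, z t), z) ∈ W12 := by
  refine ⟨fun x _ => by simp, ?_, ?_⟩
  · exact (intervalIntegrable_iff_integrableOn_Ioc_of_le zero_le_one).2
      (hz.integrable (by norm_num))
  · exact (intervalIntegrable_iff_integrableOn_Ioc_of_le zero_le_one).2 hz.integrable_sq

lemma integral_sq_snd_nonneg : 0 ≤ ∫ t in (0:ℝ)..1, (p.2 t) ^ 2 :=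
  intervalIntegral.integral_nonneg zero_le_one fun _ _ => sq_nonneg _

lemma sq_sub_le_of_le (hp : p ∈ W12) {a b : ℝ} (ha : a ∈ Icc (0:ℝ) 1) (hb : b ∈ Icc (0:ℝ) 1)
    (hab : a ≤ b) :
    (p.1 b - p.1 a) ^ 2 ≤ (b - a) * ∫ t in (0:ℝ)..1, (p.2 t) ^ 2 := by
  rw [sub_eq_integral hp ha hb]
  refine (sq_integral_le_mul_integral_sq hab (hp.2.1.mono_unitInterval ha hb)
    (hp.2.2.mono_unitInterval ha hb)).trans ?_
  refine mul_le_mul_of_nonneg_left ?_ (sub_nonneg.2 hab)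
  exact intervalIntegral.integral_mono_interval ha.1 hab hb.2
    (Filter.Eventually.of_forall fun t => sq_nonneg _) hp.2.2

lemma sq_sub_le (hp : p ∈ W12) {a b : ℝ} (ha : a ∈ Icc (0:ℝ) 1) (hb : b ∈ Icc (0:ℝ) 1) :
    (p.1 b - p.1 a) ^ 2 ≤ |b - a| * ∫ t in (0:ℝ)..1, (p.2 t) ^ 2 := by
  rcases le_total a b with h | h
  · rw [abs_of_nonneg (sub_nonneg.2 h)]
    exact sq_sub_le_of_le hp ha hb h
  · rw [abs_sub_comm, abs_of_nonneg (sub_nonneg.2 h), ← neg_sq, neg_sub]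
    exact sq_sub_le_of_le hp hb ha h

/-- A Poincaré-type inequality with a pointwise term. -/
lemma integral_sq_fst_le (hp : p ∈ W12) {a : ℝ} (ha : a ∈ Icc (0:ℝ) 1) :
    ∫ t in (0:ℝ)..1, (p.1 t) ^ 2
      ≤ 35 / 48 * (∫ t in (0:ℝ)..1, (p.2 t) ^ 2) + 5 * (p.1 a) ^ 2 := by
  set D := ∫ t in (0:ℝ)..1, (p.2 t) ^ 2 with hD
  have hD0 : 0 ≤ D := integral_sq_snd_nonneg
  have hpt : ∀ x ∈ Icc (0:ℝ) 1, (p.1 x) ^ 2 ≤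
      5 / 4 * D * ((x - a) ^ 2 + 1 / 4) + 5 * (p.1 a) ^ 2 := by
    intro x hx
    have h1 := sq_sub_le hp ha hx
    have h2 : |x - a| ≤ (x - a) ^ 2 + 1 / 4 := by
      rw [← sq_abs]; nlinarith [sq_nonneg (|x - a| - 1 / 2)]
    have h3 := mul_le_mul_of_nonneg_right h2 hD0
    nlinarith [sq_nonneg (p.1 x - 5 * p.1 a)]
  have hle := intervalIntegral.integral_mono_on zero_le_one (intervalIntegrable_sq_fst hp)
    (Continuous.intervalIntegrable (by fun_prop) 0 1) hpt
  have hpoly : ∫ x in (0:ℝ)..1, (5 / 4 * D * ((x - a) ^ 2 + 1 / 4) + 5 * (p.1 a) ^ 2)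
      = 5 / 4 * D * (1 / 3 - a + a ^ 2 + 1 / 4) + 5 * (p.1 a) ^ 2 := by
    have hi : ∀ f : ℝ → ℝ, Continuous f → IntervalIntegrable f volume 0 1 :=
      fun f hf => hf.intervalIntegrable 0 1
    rw [intervalIntegral.integral_add (hi _ (by fun_prop)) (hi _ (by fun_prop)),
      intervalIntegral.integral_const_mul,
      intervalIntegral.integral_add (hi _ (by fun_prop)) (hi _ (by fun_prop)),
      intervalIntegral.integral_comp_sub_right (fun x => x ^ 2) a, integral_pow]
    simp
    ring_nf
    simp
  rw [hpoly] at hle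
  nlinarith [mul_nonneg hD0 (mul_nonneg ha.1 (sub_nonneg.2 ha.2))]

lemma sq_le (hp : p ∈ W12) {a : ℝ} (ha : a ∈ Icc (0:ℝ) 1) :
    (p.1 a) ^ 2 ≤ 2 * (∫ t in (0:ℝ)..1, (p.1 t) ^ 2) + 2 * ∫ t in (0:ℝ)..1, (p.2 t) ^ 2 := by
  set D := ∫ t in (0:ℝ)..1, (p.2 t) ^ 2 with hD
  have hD0 : 0 ≤ D := integral_sq_snd_nonneg
  have hpt : ∀ x ∈ Icc (0:ℝ) 1, (p.1 a) ^ 2 ≤ 2 * (p.1 x) ^ 2 + 2 * D := by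
    intro x hx
    have h1 := sq_sub_le hp ha hx
    have h2 : |x - a| ≤ 1 := abs_le.2 ⟨by linarith [hx.1, ha.2], by linarith [hx.2, ha.1]⟩
    have h3 := mul_le_mul_of_nonneg_right h2 hD0
    nlinarith [sq_nonneg (2 * p.1 x - p.1 a)]
  have hi := (intervalIntegrable_sq_fst hp).const_mul 2
  have hle := intervalIntegral.integral_mono_on zero_le_one
    intervalIntegrable_const (hi.add intervalIntegrable_const) hpt
  rw [intervalIntegral.integral_add hi intervalIntegrable_const,
    intervalIntegral.integral_const_mul] at hle
  simpa using hle

lemma linear_comb (hp : p ∈ W12) (hr : r ∈ W12) (a b : ℝ) :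
    ((fun x => a * p.1 x + b * r.1 x), (fun x => a * p.2 x + b * r.2 x)) ∈ W12 := by
  have h0 : (0:ℝ) ∈ Icc (0:ℝ) 1 := by simp
  refine ⟨fun x hx => ?_, (hp.2.1.const_mul a).add (hr.2.1.const_mul b), ?_⟩
  · have h1 := (hp.2.1.mono_unitInterval h0 hx).const_mul a
    have h2 := (hr.2.1.mono_unitInterval h0 hx).const_mul b
    simp only
    rw [intervalIntegral.integral_add h1 h2, intervalIntegral.integral_const_mul,
      intervalIntegral.integral_const_mul, hp.1 x hx, hr.1 x hx]
    ring
  · have h := ((memLp_snd hp).const_mul a).add ((memLp_snd hr).const_mul b)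
    exact (intervalIntegrable_iff_integrableOn_Ioc_of_le zero_le_one).2 h.integrable_sq

lemma smul (hp : p ∈ W12) (c : ℝ) :
    ((fun x => c * p.1 x), (fun x => c * p.2 x)) ∈ W12 := by
  simpa using linear_comb hp hp c 0

lemma one_zero_mem : ((fun _ => 1, fun _ => 0) : (ℝ → ℝ) × (ℝ → ℝ)) ∈ W12 := by
  refine ⟨by simp, ?_, ?_⟩ <;> simp

end W12

namespace W12

variable {p : (ℝ → ℝ) × (ℝ → ℝ)}

lemma mem_Mset_of_pos (hp : p ∈ W12) (hpos : ∀ x ∈ Icc (0:ℝ) 1, 0 < p.1 x) : p ∈ Mset := by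
  obtain ⟨a, ha, hmin⟩ := isCompact_Icc.exists_isMinOn (nonempty_Icc.2 zero_le_one)
    (continuousOn hp)
  exact ⟨hp, p.1 a, hpos a ha, fun x hx => hmin hx⟩

lemma continuousOn_rpow (hp : p ∈ W12) (hpos : ∀ x ∈ Icc (0:ℝ) 1, 0 < p.1 x) (e : ℝ) :
    ContinuousOn (fun t => p.1 t ^ e) (Icc 0 1) :=
  (continuousOn hp).rpow_const fun x hx => Or.inl (hpos x hx).ne'

lemma intervalIntegrable_rpow (hp : p ∈ W12) (hpos : ∀ x ∈ Icc (0:ℝ) 1, 0 < p.1 x) (e : ℝ) :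
    IntervalIntegrable (fun t => p.1 t ^ e) volume 0 1 :=
  (continuousOn_rpow hp hpos e).intervalIntegrable_of_Icc zero_le_one

lemma integral_rpow_pos (hp : p ∈ W12) (hpos : ∀ x ∈ Icc (0:ℝ) 1, 0 < p.1 x) (e : ℝ) :
    0 < ∫ t in (0:ℝ)..1, p.1 t ^ e :=
  intervalIntegral.intervalIntegral_pos_of_pos_on (intervalIntegrable_rpow hp hpos e)
    (fun x hx => rpow_pos_of_pos (hpos x (Ioo_subset_Icc_self hx)) e) zero_lt_one

lemma integral_sq_pos (hp : p ∈ W12) (hpos : ∀ x ∈ Icc (0:ℝ) 1, 0 < p.1 x) :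
    0 < ∫ t in (0:ℝ)..1, (p.1 t) ^ 2 :=
  intervalIntegral.intervalIntegral_pos_of_pos_on (intervalIntegrable_sq_fst hp)
    (fun x hx => pow_pos (hpos x (Ioo_subset_Icc_self hx)) 2) zero_lt_one

lemma intervalIntegrable_mul_sq (hp : p ∈ W12) {q : ℝ → ℝ}
    (hq : IntervalIntegrable q volume 0 1) :
    IntervalIntegrable (fun t => q t * (p.1 t) ^ 2) volume 0 1 :=
  hq.mul_continuousOn (by rw [uIcc_of_le zero_le_one]; exact (continuousOn hp).pow 2)

lemma rayleigh_eq (hp : p ∈ W12) {q : ℝ → ℝ} (hq : IntervalIntegrable q volume 0 1) :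
    Rayleigh q p = ((∫ t in (0:ℝ)..1, (p.2 t) ^ 2) + ∫ t in (0:ℝ)..1, q t * (p.1 t) ^ 2) /
      ∫ t in (0:ℝ)..1, (p.1 t) ^ 2 := by
  rw [Rayleigh, intervalIntegral.integral_add hp.2.2 (intervalIntegrable_mul_sq hp hq)]

end W12

lemma integral_mul_sq_nonneg {γ : ℝ} {q y : ℝ → ℝ} (hq : q ∈ Agamma γ) :
    0 ≤ ∫ t in (0:ℝ)..1, q t * (y t) ^ 2 := by
  refine intervalIntegral.integral_nonneg_of_ae_restrict zero_le_one ?_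
  filter_upwards [hq.2.1] with t ht using mul_nonneg ht (sq_nonneg _)

/-- The potential that realises equality in the reverse Hölder inequality for `y`. -/
def dualPotential (γ : ℝ) (y : ℝ → ℝ) (x : ℝ) : ℝ :=
  (∫ t in (0:ℝ)..1, y t ^ (2 * γ / (γ - 1))) ^ (-1 / γ) * y x ^ (2 / (γ - 1))

lemma dualPotential_mem_Agamma {γ : ℝ} (hγ : γ ∈ Ioo (0:ℝ) 1) {p : (ℝ → ℝ) × (ℝ → ℝ)}
    (hp : p ∈ W12) (hpos : ∀ x ∈ Icc (0:ℝ) 1, 0 < p.1 x) :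
    dualPotential γ p.1 ∈ Agamma γ := by
  have hI := W12.integral_rpow_pos hp hpos (2 * γ / (γ - 1))
  set I := ∫ t in (0:ℝ)..1, p.1 t ^ (2 * γ / (γ - 1)) with hIdef
  refine ⟨(W12.intervalIntegrable_rpow hp hpos _).const_mul _, ?_, ?_⟩
  · filter_upwards [ae_restrict_mem measurableSet_Icc] with x hx
    exact mul_nonneg (rpow_nonneg hI.le _) (rpow_nonneg (hpos x hx).le _)
  · have h : ∀ x ∈ uIcc (0:ℝ) 1,
        dualPotential γ p.1 x ^ γ = I⁻¹ * p.1 x ^ (2 * γ / (γ - 1)) := by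
      intro x hx
      rw [uIcc_of_le zero_le_one] at hx
      rw [dualPotential, mul_rpow (rpow_nonneg hI.le _) (rpow_nonneg (hpos x hx).le _),
        ← rpow_mul hI.le, ← rpow_mul (hpos x hx).le, div_mul_cancel₀ _ hγ.1.ne', rpow_neg_one,
        div_mul_eq_mul_div]
    rw [intervalIntegral.integral_congr h, intervalIntegral.integral_const_mul, ← hIdef,
      inv_mul_cancel₀ hI.ne']

lemma rayleigh_dualPotential {γ : ℝ} (hγ : γ ∈ Ioo (0:ℝ) 1) {p : (ℝ → ℝ) × (ℝ → ℝ)}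
    (hp : p ∈ W12) (hpos : ∀ x ∈ Icc (0:ℝ) 1, 0 < p.1 x) :
    Rayleigh (dualPotential γ p.1) p = Gg γ p := by
  have hI := W12.integral_rpow_pos hp hpos (2 * γ / (γ - 1))
  have hγ1 : γ - 1 ≠ 0 := (sub_neg.2 hγ.2).ne
  have hγ0 : γ ≠ 0 := hγ.1.ne'
  rw [W12.rayleigh_eq hp (dualPotential_mem_Agamma hγ hp hpos).1, Gg, Jg]
  congr 2
  set I := ∫ t in (0:ℝ)..1, p.1 t ^ (2 * γ / (γ - 1)) with hIdef
  have h : ∀ x ∈ uIcc (0:ℝ) 1, dualPotential γ p.1 x * p.1 x ^ 2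
      = I ^ (-1 / γ) * p.1 x ^ (2 * γ / (γ - 1)) := by
    intro x hx
    rw [uIcc_of_le zero_le_one] at hx
    rw [dualPotential, mul_assoc, ← rpow_natCast (p.1 x) 2, ← rpow_add (hpos x hx)]
    congr 2
    push_cast
    field_simp
    ring
  rw [intervalIntegral.integral_congr h, intervalIntegral.integral_const_mul, ← hIdef]
  nth_rewrite 2 [← rpow_one I]
  rw [← rpow_add hI]
  congr 1
  field_simp
  ring

/-- Reverse Hölder inequality for potentials of class `A_γ`. -/
lemma rpow_integral_rpow_le {γ : ℝ} (hγ : γ ∈ Ioo (0:ℝ) 1) {p : (ℝ → ℝ) × (ℝ → ℝ)}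
    (hp : p ∈ W12) (hpos : ∀ x ∈ Icc (0:ℝ) 1, 0 < p.1 x) {q : ℝ → ℝ} (hq : q ∈ Agamma γ) :
    (∫ t in (0:ℝ)..1, (p.1 t) ^ (2 * γ / (γ - 1))) ^ ((γ - 1) / γ)
      ≤ ∫ t in (0:ℝ)..1, q t * (p.1 t) ^ 2 := by
  have hγ0 := hγ.1
  have hγ1 : 0 < 1 - γ := sub_pos.2 hγ.2
  have hI := W12.integral_rpow_pos hp hpos (2 * γ / (γ - 1))
  have hQ := integral_mul_sq_nonneg (y := p.1) hq
  have hq2 := W12.intervalIntegrable_mul_sq hp hq.1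
  have hye := W12.intervalIntegrable_rpow hp hpos (2 * γ / (γ - 1))
  have hone := hq.2.2
  rw [intervalIntegrable_iff_integrableOn_Ioc_of_le zero_le_one, IntegrableOn,
    ← memLp_one_iff_integrable] at hq2 hye
  have hae : ∀ᵐ t ∂(volume.restrict (Ioc (0:ℝ) 1)), 0 ≤ q t ∧ 0 < p.1 t := by
    filter_upwards [ae_restrict_of_ae_restrict_of_subset Ioc_subset_Icc_self hq.2.1,
      ae_restrict_mem measurableSet_Ioc] with t ht ht'
    exact ⟨ht, hpos t (Ioc_subset_Icc_self ht')⟩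
  have hm : ∀ (s : ℝ) (f : ℝ → ℝ), 0 < s → MemLp f 1 (volume.restrict (Ioc (0:ℝ) 1)) →
      MemLp (fun t => ‖f t‖ ^ s) (ENNReal.ofReal (1 / s)) (volume.restrict (Ioc (0:ℝ) 1)) := by
    intro s f hs hf
    have := hf.norm_rpow_div (ENNReal.ofReal s)
    rwa [ENNReal.toReal_ofReal hs.le, ← ENNReal.ofReal_one, ← ENNReal.ofReal_div_of_pos hs]
      at this
  have hconj : (1 / γ).HolderConjugate (1 / (1 - γ)) := by
    rw [Real.holderConjugate_iff]
    refine ⟨by rw [lt_div_iff₀ hγ0]; linarith [hγ.2], by simp⟩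
  have hH := integral_mul_le_Lp_mul_Lq_of_nonneg hconj
    (Filter.Eventually.of_forall fun t => rpow_nonneg (norm_nonneg _) _)
    (Filter.Eventually.of_forall fun t => rpow_nonneg (norm_nonneg _) _)
    (hm γ _ hγ0 hq2) (hm (1 - γ) _ hγ1 hye)
  simp only [intervalIntegral.integral_of_le zero_le_one] at hI hQ hone ⊢
  rw [integral_congr_ae (g := fun t => q t ^ γ) ?_,
    integral_congr_ae (f := fun t => (‖q t * p.1 t ^ 2‖ ^ γ) ^ (1 / γ))
      (g := fun t => q t * p.1 t ^ 2) ?_,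
    integral_congr_ae (f := fun t => (‖p.1 t ^ (2 * γ / (γ - 1))‖ ^ (1 - γ)) ^ (1 / (1 - γ)))
      (g := fun t => p.1 t ^ (2 * γ / (γ - 1))) ?_, hone, one_div_one_div, one_div_one_div] at hH
  · set I := ∫ t in Ioc (0:ℝ) 1, p.1 t ^ (2 * γ / (γ - 1))
    set Q := ∫ t in Ioc (0:ℝ) 1, q t * p.1 t ^ 2
    have h1 : I ^ (γ - 1) ≤ Q ^ γ := by
      rw [← neg_sub, rpow_neg hI.le, inv_le_iff_one_le_mul₀ (rpow_pos_of_pos hI _)]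
      exact hH
    calc I ^ ((γ - 1) / γ) = (I ^ (γ - 1)) ^ (1 / γ) := by
          rw [← rpow_mul hI.le]; ring_nf
      _ ≤ (Q ^ γ) ^ (1 / γ) :=
          rpow_le_rpow (rpow_nonneg hI.le _) h1 (one_div_nonneg.2 hγ0.le)
      _ = Q := by rw [← rpow_mul hQ, mul_one_div_cancel hγ0.ne', rpow_one]
  · filter_upwards [hae] with t ht
    rw [← rpow_mul (norm_nonneg _), mul_one_div_cancel hγ1.ne', rpow_one,
      norm_of_nonneg (rpow_nonneg ht.2.le _)]
  · filter_upwards [hae] with t ht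
    rw [← rpow_mul (norm_nonneg _), mul_one_div_cancel hγ0.ne', rpow_one,
      norm_of_nonneg (mul_nonneg ht.1 (sq_nonneg _))]
  · filter_upwards [hae] with t ht
    rw [norm_of_nonneg (rpow_nonneg ht.2.le _), norm_of_nonneg (mul_nonneg ht.1 (sq_nonneg _)),
      mul_rpow ht.1 (sq_nonneg _), ← rpow_natCast (p.1 t) 2, ← rpow_mul ht.2.le,
      ← rpow_mul ht.2.le, mul_assoc, ← rpow_add ht.2]
    have : ((2:ℕ):ℝ) * γ + 2 * γ / (γ - 1) * (1 - γ) = 0 := by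
      have : γ - 1 ≠ 0 := by linarith
      push_cast
      field_simp
      ring
    rw [this, rpow_zero, mul_one]

lemma Gg_nonneg {γ : ℝ} {p : (ℝ → ℝ) × (ℝ → ℝ)} (hpos : ∀ x ∈ Icc (0:ℝ) 1, 0 < p.1 x) :
    0 ≤ Gg γ p := by
  refine div_nonneg (add_nonneg W12.integral_sq_snd_nonneg (rpow_nonneg ?_ _))
    (intervalIntegral.integral_nonneg zero_le_one fun _ _ => sq_nonneg _)
  exact intervalIntegral.integral_nonneg zero_le_one fun x hx => rpow_nonneg (hpos x hx).le _

lemma pos_of_mem_Mset {p : (ℝ → ℝ) × (ℝ → ℝ)} (hp : p ∈ Mset) :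
    ∀ x ∈ Icc (0:ℝ) 1, 0 < p.1 x := by
  obtain ⟨_, ζ, hζ, h⟩ := hp
  exact fun x hx => hζ.trans_le (h x hx)

lemma bddBelow_Gg (γ : ℝ) : BddBelow (Gg γ '' Mset) :=
  ⟨0, by rintro _ ⟨p, hp, rfl⟩; exact Gg_nonneg (pos_of_mem_Mset hp)⟩

lemma one_zero_mem_Mset : ((fun _ => 1, fun _ => 0) : (ℝ → ℝ) × (ℝ → ℝ)) ∈ Mset :=
  ⟨W12.one_zero_mem, 1, one_pos, fun _ _ => le_rfl⟩

lemma sInf_Gg_le {γ : ℝ} {p : (ℝ → ℝ) × (ℝ → ℝ)} (hp : p ∈ W12)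
    (hpos : ∀ x ∈ Icc (0:ℝ) 1, 0 < p.1 x) : sInf (Gg γ '' Mset) ≤ Gg γ p :=
  csInf_le (bddBelow_Gg γ) (mem_image_of_mem _ (W12.mem_Mset_of_pos hp hpos))

lemma sInf_Gg_le_one (γ : ℝ) : sInf (Gg γ '' Mset) ≤ 1 := by
  have h := csInf_le (bddBelow_Gg γ) (mem_image_of_mem (Gg γ) one_zero_mem_Mset)
  simpa [Gg, Jg] using h

lemma Jg_smul {γ : ℝ} (hγ : γ ∈ Ioo (0:ℝ) 1) {p : (ℝ → ℝ) × (ℝ → ℝ)}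
    (hpos : ∀ x ∈ Icc (0:ℝ) 1, 0 < p.1 x) {c : ℝ} (hc : 0 < c) :
    Jg γ (fun x => c * p.1 x, fun x => c * p.2 x) = c ^ 2 * Jg γ p := by
  have hγ1 : γ - 1 ≠ 0 := (sub_neg.2 hγ.2).ne
  have hγ0 : γ ≠ 0 := hγ.1.ne'
  have h : ∀ x ∈ uIcc (0:ℝ) 1, (c * p.1 x) ^ (2 * γ / (γ - 1))
      = c ^ (2 * γ / (γ - 1)) * p.1 x ^ (2 * γ / (γ - 1)) := by
    intro x hx
    rw [uIcc_of_le zero_le_one] at hx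
    exact mul_rpow hc.le (hpos x hx).le
  have h0 : 0 ≤ ∫ t in (0:ℝ)..1, p.1 t ^ (2 * γ / (γ - 1)) :=
    intervalIntegral.integral_nonneg zero_le_one fun x hx => rpow_nonneg (hpos x hx).le _
  have he : 2 * γ / (γ - 1) * ((γ - 1) / γ) = ((2:ℕ):ℝ) := by
    push_cast
    field_simp
  simp only [Jg]
  rw [intervalIntegral.integral_congr h]
  simp only [mul_pow, intervalIntegral.integral_const_mul]
  rw [mul_rpow (rpow_nonneg hc.le _) h0, ← rpow_mul hc.le, he, rpow_natCast]
  ring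

lemma sInf_Gg_le_rayleigh {γ : ℝ} (hγ : γ ∈ Ioo (0:ℝ) 1) {q : ℝ → ℝ} (hq : q ∈ Agamma γ)
    {p : (ℝ → ℝ) × (ℝ → ℝ)} (hp : p ∈ W12) (hN : 0 < ∫ t in (0:ℝ)..1, (p.1 t) ^ 2) :
    sInf (Gg γ '' Mset) ≤ Rayleigh q p := by
  have hposcase : ∀ r ∈ W12, (∀ x ∈ Icc (0:ℝ) 1, 0 < r.1 x) →
      sInf (Gg γ '' Mset) ≤ Rayleigh q r := by
    intro r hr hpos
    refine (sInf_Gg_le hr hpos).trans ?_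
    rw [W12.rayleigh_eq hr hq.1, Gg, Jg]
    have := W12.integral_sq_pos hr hpos
    gcongr
    exact rpow_integral_rpow_le hγ hr hpos hq
  have h0 : (0:ℝ) ∈ Icc (0:ℝ) 1 := by simp
  by_cases hz : ∃ a ∈ Icc (0:ℝ) 1, p.1 a = 0
  · obtain ⟨a, ha, ha0⟩ := hz
    refine (sInf_Gg_le_one γ).trans ?_
    rw [W12.rayleigh_eq hp hq.1, le_div_iff₀ hN]
    have h1 := W12.integral_sq_fst_le hp ha
    have h2 := integral_mul_sq_nonneg (y := p.1) hq
    have h3 : 0 ≤ ∫ t in (0:ℝ)..1, (p.2 t) ^ 2 := W12.integral_sq_snd_nonneg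
    rw [ha0] at h1
    linarith
  · push Not at hz
    have hc := W12.continuousOn hp
    rcases lt_or_gt_of_ne (hz 0 h0) with hneg | hpos
    · have hr := W12.smul hp (-1)
      have := hposcase _ hr fun x hx => by
        by_contra hcon
        obtain ⟨a, ha, ha0⟩ := isPreconnected_Icc.intermediate_value h0 hx hc
          ⟨hneg.le, by simpa using hcon⟩
        exact hz a ha ha0
      simpa [Rayleigh] using this
    · refine hposcase p hp fun x hx => ?_
      by_contra hcon
      obtain ⟨a, ha, ha0⟩ := isPreconnected_Icc.intermediate_value hx h0 hc
        ⟨not_lt.1 hcon, hpos.le⟩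
      exact hz a ha ha0

open Filter Topology BoundedContinuousFunction in
/-- Sequences bounded in `W¹₂[0,1]` have a pointwise convergent subsequence. -/
lemma W12.exists_subseq_tendsto {p : ℕ → (ℝ → ℝ) × (ℝ → ℝ)} (hp : ∀ n, p n ∈ W12) {a b C : ℝ}
    (hab : ∀ n, ∀ x ∈ Icc (0:ℝ) 1, (p n).1 x ∈ Icc a b)
    (hC : ∀ n, ∫ t in (0:ℝ)..1, ((p n).2 t) ^ 2 ≤ C) :
    ∃ φ : ℕ → ℕ, StrictMono φ ∧ ∃ y : ℝ → ℝ, ∀ x ∈ Icc (0:ℝ) 1,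
      Tendsto (fun n => (p (φ n)).1 x) atTop (𝓝 (y x)) := by
  let f : ℕ → (Icc (0:ℝ) 1 →ᵇ ℝ) := fun n =>
    BoundedContinuousFunction.mkOfCompact
      ⟨fun x => (p n).1 x, continuousOn_iff_continuous_domRestrict.1 (continuousOn (hp n))⟩
  have hf : ∀ n x, f n x = (p n).1 x := fun n x => rfl
  have hcomp : IsCompact (closure (range f)) := by
    refine BoundedContinuousFunction.arzela_ascoli (Icc a b) isCompact_Icc _ ?_ ?_
    · rintro _ x ⟨n, rfl⟩
      exact hab n x x.2
    · refine Metric.equicontinuous_of_continuity_modulus (fun d => √(d * C)) ?_ _ ?_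
      · have : Continuous fun d : ℝ => √(d * C) := by fun_prop
        simpa using this.tendsto 0
      · rintro x y ⟨_, n, rfl⟩
        simp only [hf, Real.dist_eq]
        refine abs_le_sqrt ?_
        refine (sq_sub_le (hp n) y.2 x.2).trans ?_
        exact mul_le_mul_of_nonneg_left (hC n) (abs_nonneg _)
  obtain ⟨g, -, φ, hφ, hg⟩ := hcomp.tendsto_subseq fun n => subset_closure (mem_range_self n)
  refine ⟨φ, hφ, fun x => if hx : x ∈ Icc (0:ℝ) 1 then g ⟨x, hx⟩ else 0, fun x hx => ?_⟩
  simp only [dif_pos hx]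
  have := (BoundedContinuousFunction.tendsto_iff_tendstoUniformly.1 hg).tendsto_at ⟨x, hx⟩
  exact this

open Filter Topology in
/-- Dominated convergence for the functionals `∫ h(y)` with `h` continuous, along functions with
values in a compact interval. -/
lemma tendsto_integral_comp {ι : Type*} {l : Filter ι} [l.IsCountablyGenerated]
    {u : ι → ℝ → ℝ} {y h : ℝ → ℝ} {a b : ℝ} (hh : ContinuousOn h (Icc a b))
    (hu : ∀ i, ContinuousOn (u i) (Icc 0 1))
    (hab : ∀ i, ∀ x ∈ Icc (0:ℝ) 1, u i x ∈ Icc a b)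
    (hlim : ∀ x ∈ Icc (0:ℝ) 1, Tendsto (fun i => u i x) l (𝓝 (y x))) :
    Tendsto (fun i => ∫ t in (0:ℝ)..1, h (u i t)) l (𝓝 (∫ t in (0:ℝ)..1, h (y t))) := by
  rcases l.eq_or_neBot with rfl | hl
  · exact tendsto_bot
  obtain ⟨C, hC⟩ := isCompact_Icc.exists_bound_of_continuousOn hh
  have hsub : uIoc (0:ℝ) 1 ⊆ Icc 0 1 := by
    rw [uIoc_of_le zero_le_one]; exact Ioc_subset_Icc_self
  refine intervalIntegral.tendsto_integral_filter_of_dominated_convergence (fun _ => C)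
    (Eventually.of_forall fun i => ?_) (Eventually.of_forall fun i => ?_)
    intervalIntegrable_const ?_
  · exact ((hh.comp (hu i) (hab i)).mono hsub).aestronglyMeasurable measurableSet_uIoc
  · exact Eventually.of_forall fun x hx => hC _ (hab i x (hsub hx))
  · refine Eventually.of_forall fun x hx => ?_
    have hx' := hsub hx
    have hy : y x ∈ Icc a b :=
      isClosed_Icc.mem_of_tendsto (hlim x hx') (Eventually.of_forall fun i => hab i x hx')
    exact (hh (y x) hy).tendsto.comp
      (tendsto_nhdsWithin_iff.2 ⟨hlim x hx', Eventually.of_forall fun i => hab i x hx'⟩)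

lemma norm_toLp_sq_eq_integral {f : ℝ → ℝ} (hf : MemLp f 2 (volume.restrict (Ioc (0:ℝ) 1))) :
    ‖hf.toLp f‖ ^ 2 = ∫ t in (0:ℝ)..1, (f t) ^ 2 := by
  rw [← real_inner_self_eq_norm_sq, L2.inner_def, intervalIntegral.integral_of_le zero_le_one]
  refine integral_congr_ae ?_
  filter_upwards [hf.coeFn_toLp] with t ht
  rw [ht]
  simp [sq]

open Filter Topology in
/-- A normalised minimising sequence that converges pointwise converges in `W¹₂[0,1]`, to a
minimiser. -/
lemma exists_minimizer_of_tendsto {γ : ℝ} {p : ℕ → (ℝ → ℝ) × (ℝ → ℝ)} {y : ℝ → ℝ} {a b : ℝ}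
    (ha : 0 < a) (hp : ∀ n, p n ∈ W12) (hab : ∀ n, ∀ x ∈ Icc (0:ℝ) 1, (p n).1 x ∈ Icc a b)
    (hN : ∀ n, ∫ t in (0:ℝ)..1, ((p n).1 t) ^ 2 = 1)
    (hJ : Tendsto (fun n => Jg γ (p n)) atTop (𝓝 (sInf (Gg γ '' Mset))))
    (hy : ∀ x ∈ Icc (0:ℝ) 1, Tendsto (fun n => (p n).1 x) atTop (𝓝 (y x))) :
    ∃ r ∈ W12, (∀ x ∈ Icc (0:ℝ) 1, 0 < r.1 x) ∧ Gg γ r = sInf (Gg γ '' Mset) := by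
  set m := sInf (Gg γ '' Mset) with hm
  let F : (ℝ → ℝ) → ℝ := fun u =>
    (∫ t in (0:ℝ)..1, u t ^ (2 * γ / (γ - 1))) ^ ((γ - 1) / γ)
  have hyab : ∀ x ∈ Icc (0:ℝ) 1, y x ∈ Icc a b := fun x hx =>
    isClosed_Icc.mem_of_tendsto (hy x hx) (Eventually.of_forall fun n => hab n x hx)
  have hpow : ContinuousOn (fun t : ℝ => t ^ 2) (Icc a b) := by fun_prop
  have hrpow : ContinuousOn (fun t : ℝ => t ^ (2 * γ / (γ - 1))) (Icc a b) :=
    continuousOn_id.rpow_const fun x hx => Or.inl (ha.trans_le hx.1).ne'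
  have hNy : ∫ t in (0:ℝ)..1, (y t) ^ 2 = 1 := by
    have := tendsto_integral_comp hpow (fun n => W12.continuousOn (hp n)) hab hy
    simp only [hN] at this
    exact tendsto_nhds_unique this tendsto_const_nhds
  let V : ℕ → Lp ℝ 2 (volume.restrict (Ioc (0:ℝ) 1)) := fun n =>
    (W12.memLp_snd (hp n)).toLp (p n).2
  have hV : ∀ n, ‖V n‖ ^ 2 = ∫ t in (0:ℝ)..1, ((p n).2 t) ^ 2 := fun n =>
    norm_toLp_sq_eq_integral _
  let q : ℕ × ℕ → (ℝ → ℝ) × (ℝ → ℝ) := fun i =>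
    (fun x => 1 / 2 * (p i.1).1 x + 1 / 2 * (p i.2).1 x,
      fun x => 1 / 2 * (p i.1).2 x + 1 / 2 * (p i.2).2 x)
  have hq : ∀ i, q i ∈ W12 := fun i => W12.linear_comb (hp i.1) (hp i.2) (1 / 2) (1 / 2)
  have hqab : ∀ i, ∀ x ∈ Icc (0:ℝ) 1, (q i).1 x ∈ Icc a b := by
    intro i x hx
    have h1 := hab i.1 x hx
    have h2 := hab i.2 x hx
    simp only [q]
    exact ⟨by linarith [h1.1, h2.1], by linarith [h1.2, h2.2]⟩
  have hqpos : ∀ i, ∀ x ∈ Icc (0:ℝ) 1, 0 < (q i).1 x := fun i x hx =>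
    ha.trans_le (hqab i x hx).1
  have hfst : Tendsto (Prod.fst : ℕ × ℕ → ℕ) atTop atTop := by
    rw [← prod_atTop_atTop_eq]; exact tendsto_fst
  have hsnd : Tendsto (Prod.snd : ℕ × ℕ → ℕ) atTop atTop := by
    rw [← prod_atTop_atTop_eq]; exact tendsto_snd
  have hqy : ∀ x ∈ Icc (0:ℝ) 1, Tendsto (fun i => (q i).1 x) atTop (𝓝 (y x)) := by
    intro x hx
    have h := (((hy x hx).comp hfst).const_mul (1 / 2)).add
      (((hy x hx).comp hsnd).const_mul (1 / 2))
    rwa [← add_mul, add_halves, one_mul] at h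
  have hIpos : 0 < ∫ t in (0:ℝ)..1, y t ^ (2 * γ / (γ - 1)) := by
    obtain ⟨C, hC0, hC⟩ : ∃ C, 0 < C ∧ ∀ x ∈ Icc a b, C ≤ x ^ (2 * γ / (γ - 1)) := by
      have hne : a ≤ b := (hyab 0 (by simp)).1.trans (hyab 0 (by simp)).2
      obtain ⟨c, hc, hmin⟩ := isCompact_Icc.exists_isMinOn (nonempty_Icc.2 hne) hrpow
      exact ⟨_, rpow_pos_of_pos (ha.trans_le hc.1) _, fun x hx => hmin hx⟩
    refine hC0.trans_le (ge_of_tendsto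
      (tendsto_integral_comp hrpow (fun n => W12.continuousOn (hp n)) hab hy)
      (Eventually.of_forall fun n => ?_))
    have h := intervalIntegral.integral_mono_on zero_le_one
      (intervalIntegrable_const (c := C))
      (W12.intervalIntegrable_rpow (hp n) (fun x hx => ha.trans_le (hab n x hx).1)
        (2 * γ / (γ - 1))) fun x hx => hC _ (hab n x hx)
    simpa using h
  have hF : ∀ {ι : Type} {l : Filter ι} [l.IsCountablyGenerated] (u : ι → (ℝ → ℝ) × (ℝ → ℝ)),
      (∀ i, u i ∈ W12) → (∀ i, ∀ x ∈ Icc (0:ℝ) 1, (u i).1 x ∈ Icc a b) →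
      (∀ x ∈ Icc (0:ℝ) 1, Tendsto (fun i => (u i).1 x) l (𝓝 (y x))) →
      Tendsto (fun i => F (u i).1) l (𝓝 (F y)) := by
    intro ι l _ u hu huab huy
    exact (tendsto_integral_comp hrpow (fun i => W12.continuousOn (hu i)) huab huy).rpow_const
      (Or.inl hIpos.ne')
  have hD : Tendsto (fun n => ‖V n‖ ^ 2) atTop (𝓝 (m - F y)) := by
    refine (hJ.sub (hF p hp hab hy)).congr fun n => ?_
    rw [hV]
    exact add_sub_cancel_right _ _
  have hmid : ∀ i : ℕ × ℕ, ‖V i.1 + V i.2‖ ^ 2 = 4 * ∫ t in (0:ℝ)..1, ((q i).2 t) ^ 2 := by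
    intro i
    rw [← MemLp.toLp_add, norm_toLp_sq_eq_integral, ← intervalIntegral.integral_const_mul]
    congr 1
    funext t
    simp only [q, Pi.add_apply]
    ring
  have hdist : ∀ i : ℕ × ℕ, dist (V i.1) (V i.2) ^ 2 ≤ 2 * (‖V i.1‖ ^ 2 + ‖V i.2‖ ^ 2) -
      4 * (m * (∫ t in (0:ℝ)..1, ((q i).1 t) ^ 2) - F (q i).1) := by
    intro i
    have h1 := parallelogram_law_with_norm ℝ (V i.1) (V i.2)
    have h2 : m ≤ Gg γ (q i) := sInf_Gg_le (hq i) (hqpos i)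
    rw [Gg, le_div_iff₀ (W12.integral_sq_pos (hq i) (hqpos i))] at h2
    change _ ≤ (∫ t in (0:ℝ)..1, ((q i).2 t) ^ 2) + F (q i).1 at h2
    have h3 := hmid i
    rw [dist_eq_norm]
    nlinarith
  have hcauchy : CauchySeq V := by
    rw [cauchySeq_iff_tendsto_dist_atTop_0]
    have hsq : Tendsto (fun i : ℕ × ℕ => dist (V i.1) (V i.2) ^ 2) atTop (𝓝 0) := by
      refine tendsto_of_tendsto_of_tendsto_of_le_of_le tendsto_const_nhds ?_
        (fun i => sq_nonneg _) hdist
      have h1 := (((hD.comp hfst).add (hD.comp hsnd)).const_mul 2).sub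
        ((((tendsto_integral_comp hpow (fun i => W12.continuousOn (hq i)) hqab hqy).const_mul
          m).sub (hF q hq hqab hqy)).const_mul 4)
      have h2 : 2 * (m - F y + (m - F y)) - 4 * (m * 1 - F y) = 0 := by ring
      rwa [hNy, h2] at h1
    simpa using hsq.sqrt
  obtain ⟨Z, hZ⟩ := cauchySeq_tendsto_of_complete hcauchy
  have hz : MemLp Z 2 (volume.restrict (Ioc (0:ℝ) 1)) := Lp.memLp Z
  have hr := W12.mem_of_memLp hz (y 0)
  set r : (ℝ → ℝ) × (ℝ → ℝ) := (fun x => y 0 + ∫ t in (0:ℝ)..x, Z t, Z) with hrdef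
  have hr0 : r.1 0 = y 0 := by simp [hrdef]
  have h0 : (0:ℝ) ∈ Icc (0:ℝ) 1 := by simp
  have hry : ∀ x ∈ Icc (0:ℝ) 1, r.1 x = y x := by
    intro x hx
    have hbound : ∀ n, |((p n).1 x - (p n).1 0) - (r.1 x - r.1 0)| ≤ ‖V n - Z‖ := by
      intro n
      refine abs_le_of_sq_le_sq ?_ (norm_nonneg _)
      have hdiff := W12.linear_comb (hp n) hr 1 (-1)
      have h1 := W12.sq_sub_le hdiff h0 hx
      have h2 : ‖V n - Z‖ ^ 2 = ∫ t in (0:ℝ)..1, (1 * (p n).2 t + -1 * r.2 t) ^ 2 := by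
        conv_lhs => rw [← Lp.toLp_coeFn Z hz]
        rw [← MemLp.toLp_sub, norm_toLp_sq_eq_integral]
        congr 1
        funext t
        simp only [hrdef, Pi.sub_apply]
        ring
      rw [h2]
      refine le_trans (le_of_eq (by ring)) (h1.trans (mul_le_of_le_one_left
        (W12.integral_sq_snd_nonneg (p := (0, fun t => 1 * (p n).2 t + -1 * r.2 t))) ?_))
      rw [sub_zero, abs_of_nonneg hx.1]
      exact hx.2
    have hlim : Tendsto (fun n => (p n).1 x - (p n).1 0) atTop (𝓝 (r.1 x - r.1 0)) := by
      rw [tendsto_iff_dist_tendsto_zero]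
      exact squeeze_zero (fun _ => dist_nonneg) hbound
        (tendsto_iff_norm_sub_tendsto_zero.1 hZ)
    have h3 := tendsto_nhds_unique hlim ((hy x hx).sub (hy 0 h0))
    linarith
  have hpos : ∀ x ∈ Icc (0:ℝ) 1, 0 < r.1 x := fun x hx => by
    rw [hry x hx]
    exact ha.trans_le (hyab x hx).1
  have hDr : ∫ t in (0:ℝ)..1, (r.2 t) ^ 2 = m - F y := by
    rw [← norm_toLp_sq_eq_integral hz, Lp.toLp_coeFn]
    exact tendsto_nhds_unique (hZ.norm.pow 2) hD
  have hcongr : ∀ h : ℝ → ℝ, ∫ t in (0:ℝ)..1, h (r.1 t) = ∫ t in (0:ℝ)..1, h (y t) := fun h =>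
    intervalIntegral.integral_congr fun x hx => by
      rw [uIcc_of_le zero_le_one] at hx
      exact congrArg h (hry x hx)
  refine ⟨r, hr, hpos, ?_⟩
  rw [Gg, Jg, hcongr (fun s => s ^ 2), hcongr (fun s => s ^ (2 * γ / (γ - 1))), hNy, hDr, div_one]
  exact sub_add_cancel _ _

lemma exists_minimizer {γ : ℝ} (hγ : γ ∈ Ioo (0:ℝ) 1) :
    ∃ r ∈ W12, (∀ x ∈ Icc (0:ℝ) 1, 0 < r.1 x) ∧ Gg γ r = sInf (Gg γ '' Mset) := by
  set m := sInf (Gg γ '' Mset) with hm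
  have hseq : ∀ n : ℕ, ∃ r ∈ W12, (∀ x ∈ Icc (0:ℝ) 1, r.1 x ∈ Icc (1 / 7 : ℝ) 3) ∧
      (∫ t in (0:ℝ)..1, (r.1 t) ^ 2) = 1 ∧ (∫ t in (0:ℝ)..1, (r.2 t) ^ 2) ≤ 6 / 5 ∧
      m ≤ Jg γ r ∧ Jg γ r ≤ m + 1 / 5 * (1 / ((n:ℝ) + 1)) := by
    intro n
    have hn : (0:ℝ) < 1 / ((n:ℝ) + 1) := Nat.one_div_pos_of_nat
    have hn1 : 1 / ((n:ℝ) + 1) ≤ 1 := by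
      rw [div_le_one (by positivity)]
      simp
    obtain ⟨_, ⟨p, hpM, rfl⟩, hlt⟩ := exists_lt_of_csInf_lt
      (⟨_, mem_image_of_mem (Gg γ) one_zero_mem_Mset⟩ : (Gg γ '' Mset).Nonempty)
      (show sInf (Gg γ '' Mset) < m + 1 / 5 * (1 / ((n:ℝ) + 1)) by linarith)
    have hpos := pos_of_mem_Mset hpM
    have hNp := W12.integral_sq_pos hpM.1 hpos
    set N := ∫ t in (0:ℝ)..1, (p.1 t) ^ 2 with hNdef
    have hc : 0 < 1 / √N := by positivity
    have hc2 : (1 / √N) ^ 2 = 1 / N := by rw [div_pow, one_pow, sq_sqrt hNp.le]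
    have hr := W12.smul hpM.1 (1 / √N)
    have hJr := Jg_smul hγ hpos hc
    have hNr : ∫ t in (0:ℝ)..1, (1 / √N * p.1 t) ^ 2 = 1 := by
      simp only [mul_pow, intervalIntegral.integral_const_mul]
      rw [hc2, ← hNdef, one_div_mul_cancel hNp.ne']
    have hrpos : ∀ x ∈ Icc (0:ℝ) 1, 0 < 1 / √N * p.1 x := fun x hx => mul_pos hc (hpos x hx)
    rw [hc2, one_div_mul_eq_div] at hJr
    change _ = Gg γ p at hJr
    set r : (ℝ → ℝ) × (ℝ → ℝ) := (fun x => 1 / √N * p.1 x, fun x => 1 / √N * p.2 x)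
    have hD : ∫ t in (0:ℝ)..1, (r.2 t) ^ 2 ≤ 6 / 5 := by
      have h1 : (∫ t in (0:ℝ)..1, (r.2 t) ^ 2) ≤ Jg γ r :=
        le_add_of_nonneg_right (rpow_nonneg (W12.integral_rpow_pos hr hrpos _).le _)
      have h2 : m ≤ 1 := sInf_Gg_le_one γ
      linarith
    refine ⟨r, hr, fun x hx => ?_, hNr, hD, ?_, ?_⟩
    · have h1 := W12.integral_sq_fst_le hr hx
      have h2 := W12.sq_le hr hx
      have h3 : 0 < r.1 x := hrpos x hx
      change (∫ t in (0:ℝ)..1, (r.1 t) ^ 2) = 1 at hNr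
      rw [hNr] at h1 h2
      exact ⟨by nlinarith, by nlinarith⟩
    · rw [hJr]
      exact sInf_Gg_le hpM.1 hpos
    · rw [hJr]
      exact hlt.le
  choose p hp hab hN hD hJ1 hJ2 using hseq
  obtain ⟨φ, hφ, y, hy⟩ := W12.exists_subseq_tendsto hp hab hD
  refine exists_minimizer_of_tendsto (p := fun n => p (φ n)) (by norm_num) (fun n => hp _)
    (fun n => hab _) (fun n => hN _) ?_ hy
  have h : Filter.Tendsto (fun n => Jg γ (p n)) Filter.atTop (nhds m) := by
    refine tendsto_of_tendsto_of_tendsto_of_le_of_le tendsto_const_nhds ?_ hJ1 hJ2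
    simpa only [mul_zero, add_zero] using
      ((tendsto_one_div_add_atTop_nhds_zero_nat (𝕜 := ℝ)).const_mul (1 / 5)).const_add m
  exact h.comp hφ.tendsto_atTop

/-- For every `γ ∈ (0,1)` the infimum `m_γ` of the first eigenvalues `λ₁(q)`
over `q ∈ A_γ` is attained at some `q* ∈ A_γ`. -/
theorem attained_inf (γ : ℝ) (hγ : γ ∈ Ioo (0:ℝ) 1) :
    ∃ qstar ∈ Agamma γ, lambda1 qstar = mGamma γ := by
  obtain ⟨r, hr, hpos, hmin⟩ := exists_minimizer hγ
  have hlow : ∀ q ∈ Agamma γ, sInf (Gg γ '' Mset) ≤ lambda1 q := by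
    intro q hq
    refine le_csInf ⟨_, r, hr, W12.integral_sq_pos hr hpos, rfl⟩ ?_
    rintro _ ⟨p, hp, hN, rfl⟩
    exact sInf_Gg_le_rayleigh hγ hq hp hN
  have hq := dualPotential_mem_Agamma hγ hr hpos
  have hle : lambda1 (dualPotential γ r.1) ≤ sInf (Gg γ '' Mset) := by
    rw [← hmin, ← rayleigh_dualPotential hγ hr hpos]
    refine csInf_le ⟨sInf (Gg γ '' Mset), ?_⟩ ⟨r, hr, W12.integral_sq_pos hr hpos, rfl⟩
    rintro _ ⟨p, hp, hN, rfl⟩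
    exact sInf_Gg_le_rayleigh hγ hq hp hN
  refine ⟨_, hq, le_antisymm ?_ ?_⟩
  · refine hle.trans (le_csInf ⟨_, mem_image_of_mem lambda1 hq⟩ ?_)
    rintro _ ⟨q, hq', rfl⟩
    exact hlow q hq'
  · refine csInf_le ⟨sInf (Gg γ '' Mset), ?_⟩ (mem_image_of_mem lambda1 hq)
    rintro _ ⟨q, hq', rfl⟩
    exact hlow q hq'
end
end

section
/- Let γ = 1 − 2π⁻². Then the function I₀(α) := ∫_{ω⁻_α}^{ω⁺_α} dt / √(f_α(t)) is strictly increasing on the interval (γ^{−γ}(1−γ)^{γ−1}, ∞). -/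
open MeasureTheory Set Real

noncomputable section

/-- `f_α(t) = α t^{2γ} − t² − 1`. -/
def fA (γ α t : ℝ) : ℝ := α * t ^ (2 * γ) - t ^ 2 - 1

/-- The derivative `f_α'(t) = 2αγ t^{2γ−1} − 2t`. -/
def fA' (γ α t : ℝ) : ℝ := 2 * α * γ * t ^ (2 * γ - 1) - 2 * t

/-- The second derivative `f_α''(t) = 2αγ(2γ−1) t^{2γ−2} − 2`. -/
def fA'' (γ α t : ℝ) : ℝ := 2 * α * γ * (2 * γ - 1) * t ^ (2 * γ - 2) - 2

/-- `ψ_α := (f_α')² − 2 f_α f_α''`. -/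
def psiA (γ α t : ℝ) : ℝ := (fA' γ α t) ^ 2 - 2 * fA γ α t * fA'' γ α t

/-- The left endpoint `ω⁻_α` of the positivity interval of `f_α`. -/
def omegaMinus (γ α : ℝ) : ℝ := sInf {t : ℝ | 0 < t ∧ 0 < fA γ α t}

/-- The right endpoint `ω⁺_α` of the positivity interval of `f_α`. -/
def omegaPlus (γ α : ℝ) : ℝ := sSup {t : ℝ | 0 < t ∧ 0 < fA γ α t}

/-- `I₀(α) := ∫_{ω⁻_α}^{ω⁺_α} dt / √(f_α(t))`. -/
def I0 (γ α : ℝ) : ℝ :=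
  ∫ t in omegaMinus γ α..omegaPlus γ α, 1 / Real.sqrt (fA γ α t)

/-- The potential `x² − (2/(c+1)) x^{c+1}`, normalised to vanish at its minimum `x = 1`. -/
def pot (c x : ℝ) : ℝ := x ^ 2 - 2 / (c + 1) * x ^ (c + 1) + (2 / (c + 1) - 1)

/-- The derivative of `pot c`. -/
def potDeriv (c x : ℝ) : ℝ := 2 * (x - x ^ c)

lemma rpow_eq_mul_rpow_sub_one {x : ℝ} (hx : 0 < x) (c : ℝ) : x ^ c = x * x ^ (c - 1) := by
  rw [rpow_sub_one hx.ne']; field_simp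

lemma rpow_add_one_eq_sq_mul {x : ℝ} (hx : 0 < x) (c : ℝ) : x ^ (c + 1) = x ^ 2 * x ^ (c - 1) := by
  rw [rpow_sub_one hx.ne', rpow_add_one hx.ne']; field_simp

lemma hasDerivAt_rpow_sub_one {x : ℝ} (hx : 0 < x) (c : ℝ) :
    HasDerivAt (fun y : ℝ => y ^ (c - 1)) ((c - 1) * x ^ (c - 1) / x) x := by
  have h := hasDerivAt_rpow_const (x := x) (p := c - 1) (Or.inl hx.ne')
  rwa [rpow_sub_one hx.ne', ← mul_div_assoc] at h

lemma pot_one (c : ℝ) : pot c 1 = 0 := by simp [pot]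

lemma pot_zero {c : ℝ} (hc : 0 < c) : pot c 0 = 2 / (c + 1) - 1 := by
  simp [pot, zero_rpow (by linarith : c + 1 ≠ 0)]

lemma continuous_pot {c : ℝ} (hc : 0 < c) : Continuous (pot c) := by
  have := continuous_id.rpow_const (p := c + 1) (fun x : ℝ => Or.inr (by linarith))
  unfold pot
  fun_prop

lemma hasDerivAt_pot {c x : ℝ} (hc : 0 < c) (hx : 0 < x) :
    HasDerivAt (pot c) (potDeriv c x) x := by
  have h := hasDerivAt_rpow_const (x := x) (p := c + 1) (Or.inl hx.ne')
  have h2 := (((hasDerivAt_pow 2 x).sub (h.const_mul (2 / (c + 1)))).add_const (2 / (c + 1) - 1))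
  refine (show HasDerivAt (pot c) _ x from h2).congr_deriv ?_
  have : c + 1 ≠ 0 := by linarith
  simp only [potDeriv, add_sub_cancel_right]
  field_simp
  ring

lemma hasDerivAt_potDeriv {c x : ℝ} (hx : 0 < x) :
    HasDerivAt (potDeriv c) (2 * (1 - c * x ^ (c - 1))) x :=
  ((hasDerivAt_id x).sub (hasDerivAt_rpow_const (Or.inl hx.ne'))).const_mul 2

lemma potDeriv_eq {c x : ℝ} (hx : 0 < x) : potDeriv c x = 2 * x * (1 - x ^ (c - 1)) := by
  rw [potDeriv, rpow_eq_mul_rpow_sub_one hx]; ring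

lemma potDeriv_pos {c x : ℝ} (hc : c < 1) (hx : 1 < x) : 0 < potDeriv c x := by
  rw [potDeriv_eq (by linarith)]
  have := rpow_lt_one_of_one_lt_of_neg hx (by linarith : c - 1 < 0)
  have : 0 < 1 - x ^ (c - 1) := by linarith
  positivity

lemma potDeriv_neg {c x : ℝ} (hc : c < 1) (hx : 0 < x) (hx1 : x < 1) : potDeriv c x < 0 := by
  rw [potDeriv_eq hx]
  have := one_lt_rpow_of_pos_of_lt_one_of_neg hx hx1 (by linarith : c - 1 < 0)
  nlinarith

lemma strictMonoOn_pot {c : ℝ} (hc : 0 < c) (hc1 : c < 1) : StrictMonoOn (pot c) (Ici 1) := by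
  refine strictMonoOn_of_hasDerivWithinAt_pos (f' := potDeriv c) (convex_Ici 1)
    (continuous_pot hc).continuousOn ?_ ?_ <;> rw [interior_Ici]
  · exact fun x hx => (hasDerivAt_pot hc (by linarith [mem_Ioi.1 hx])).hasDerivWithinAt
  · exact fun x hx => potDeriv_pos hc1 hx

lemma strictAntiOn_pot {c : ℝ} (hc : 0 < c) (hc1 : c < 1) : StrictAntiOn (pot c) (Icc 0 1) := by
  refine strictAntiOn_of_hasDerivWithinAt_neg (f' := potDeriv c) (convex_Icc 0 1)
    (continuous_pot hc).continuousOn ?_ ?_ <;> rw [interior_Icc]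
  · exact fun x hx => (hasDerivAt_pot hc hx.1).hasDerivWithinAt
  · exact fun x hx => potDeriv_neg hc1 hx.1 hx.2

lemma pot_pos {c x : ℝ} (hc : 0 < c) (hc1 : c < 1) (hx : 0 < x) (hx1 : x ≠ 1) : 0 < pot c x := by
  rw [← pot_one c]
  rcases lt_or_gt_of_ne hx1 with h | h
  · exact strictAntiOn_pot hc hc1 ⟨hx.le, h.le⟩ ⟨zero_le_one, le_rfl⟩ h
  · exact strictMonoOn_pot hc hc1 self_mem_Ici h.le h

/-- The difference between an algebraic comparison function and `pot c`; it is positive for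
`x > 1` and negative for `0 < x < 1`. -/
def potGap (c x : ℝ) : ℝ :=
  x ^ 3 * (1 - x ^ (c - 1)) ^ 2 * (1 - c * x ^ (c - 1)) / ((1 - c) ^ 2 * x ^ (c - 1)) - pot c x

lemma hasDerivAt_potGap {c x : ℝ} (hc : 0 < c) (hc1 : c < 1) (hx : 0 < x) :
    HasDerivAt (potGap c) (x * ((1 - x ^ (c - 1)) * (x * ((4 - c) - (2 + 4 * c) * x ^ (c - 1) +
      (c + 2 * c ^ 2) * (x ^ (c - 1)) ^ 2) - 2 * (1 - c) ^ 2 * x ^ (c - 1))) /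
      ((1 - c) ^ 2 * x ^ (c - 1))) x := by
  have he := hasDerivAt_rpow_sub_one hx c
  have he0 : 0 < x ^ (c - 1) := rpow_pos_of_pos hx _
  have h1 : 1 - c ≠ 0 := by linarith
  have h := ((((hasDerivAt_pow 3 x).mul ((he.const_sub 1).pow 2)).mul
    ((he.const_mul c).const_sub 1)).div (he.const_mul ((1 - c) ^ 2)) (by positivity)).sub
    (hasDerivAt_pot hc hx)
  refine (show HasDerivAt (potGap c) _ x from h).congr_deriv ?_
  simp only [Pi.mul_apply, Pi.pow_apply, potDeriv_eq hx, Nat.cast_ofNat]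
  generalize x ^ (c - 1) = e at *
  field_simp
  ring

lemma potGap_one (c : ℝ) : potGap c 1 = 0 := by simp [potGap, pot_one]

lemma potGap_pos {c x : ℝ} (hc : 0 < c) (hc1 : c < 1) (hx : 1 < x) : 0 < potGap c x := by
  have hm : StrictMonoOn (potGap c) (Ici 1) := by
    refine strictMonoOn_of_hasDerivWithinAt_pos (convex_Ici 1)
      (fun y hy => (hasDerivAt_potGap hc hc1
        (zero_lt_one.trans_le (mem_Ici.1 hy))).continuousAt.continuousWithinAt)
      (fun y hy => (hasDerivAt_potGap hc hc1 ?_).hasDerivWithinAt) (fun y hy => ?_) <;>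
      rw [interior_Ici, mem_Ioi] at hy
    · linarith
    · have he0 : 0 < y ^ (c - 1) := rpow_pos_of_pos (by linarith) _
      have he := rpow_lt_one_of_one_lt_of_neg hy (by linarith : c - 1 < 0)
      have h1 : 0 < 1 - c := by linarith
      have h2 : 0 < 1 - y ^ (c - 1) := by linarith
      have h3 : 0 < (1 - y ^ (c - 1)) * (4 - c - (c + 2 * c ^ 2) * y ^ (c - 1)) :=
        mul_pos h2 (by nlinarith [mul_lt_mul_of_pos_left he (by positivity : 0 < c + 2 * c ^ 2)])
      have h4 : 0 < 2 * (1 - c) ^ 2 * y ^ (c - 1) := by positivity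
      have h5 : 0 < y * ((4 - c) - (2 + 4 * c) * y ^ (c - 1) +
          (c + 2 * c ^ 2) * (y ^ (c - 1)) ^ 2) - 2 * (1 - c) ^ 2 * y ^ (c - 1) := by
        generalize y ^ (c - 1) = e at *
        have h6 : 2 * (1 - c) ^ 2 * e < (4 - c) - (2 + 4 * c) * e + (c + 2 * c ^ 2) * e ^ 2 := by
          linarith
        nlinarith
      positivity
  simpa [potGap_one] using hm self_mem_Ici hx.le hx

lemma potGap_neg {c x : ℝ} (hc : 0 < c) (hc1 : c < 1) (hx : 0 < x) (hx1 : x < 1) :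
    potGap c x < 0 := by
  have h1 : 0 < 1 - c := by linarith
  have hex : 0 < x ^ (c - 1) := rpow_pos_of_pos hx _
  rcases le_or_gt 1 (c * x ^ (c - 1)) with h | h
  · have hp := pot_pos hc hc1 hx hx1.ne
    have : x ^ 3 * (1 - x ^ (c - 1)) ^ 2 * (1 - c * x ^ (c - 1)) / ((1 - c) ^ 2 * x ^ (c - 1)) ≤ 0 :=
      div_nonpos_of_nonpos_of_nonneg
        (mul_nonpos_of_nonneg_of_nonpos (by positivity) (by linarith)) (by positivity)
    rw [potGap]; linarith
  have hm : StrictMonoOn (potGap c) (Icc x 1) := by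
    refine strictMonoOn_of_hasDerivWithinAt_pos (convex_Icc x 1)
      (fun y hy => (hasDerivAt_potGap hc hc1
        (hx.trans_le hy.1)).continuousAt.continuousWithinAt)
      (fun y hy => (hasDerivAt_potGap hc hc1 ?_).hasDerivWithinAt) (fun y hy => ?_) <;>
      rw [interior_Icc] at hy
    · exact hx.trans hy.1
    · have hy0 : 0 < y := hx.trans hy.1
      have he0 : 0 < y ^ (c - 1) := rpow_pos_of_pos hy0 _
      have he := one_lt_rpow_of_pos_of_lt_one_of_neg hy0 hy.2 (by linarith : c - 1 < 0)
      have hle := rpow_lt_rpow_of_neg hx hy.1 (by linarith : c - 1 < 0)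
      have hce : c * y ^ (c - 1) < 1 := (mul_lt_mul_of_pos_left hle hc).trans h
      have h2 : 1 - y ^ (c - 1) < 0 := by linarith
      have h3 : (1 - y ^ (c - 1)) * (4 - c - (c + 2 * c ^ 2) * y ^ (c - 1)) < 0 :=
        mul_neg_of_neg_of_pos h2 (by nlinarith)
      have h4 : 0 < 2 * (1 - c) ^ 2 * y ^ (c - 1) := by positivity
      have h5 : y * ((4 - c) - (2 + 4 * c) * y ^ (c - 1) +
          (c + 2 * c ^ 2) * (y ^ (c - 1)) ^ 2) - 2 * (1 - c) ^ 2 * y ^ (c - 1) < 0 := by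
        have hy1 := hy.2
        generalize y ^ (c - 1) = e at *
        have h6 : (4 - c) - (2 + 4 * c) * e + (c + 2 * c ^ 2) * e ^ 2 < 2 * (1 - c) ^ 2 * e := by
          linarith
        nlinarith
      have h7 := mul_pos_of_neg_of_neg h2 h5
      positivity
  simpa [potGap_one] using hm (left_mem_Icc.2 hx1.le) (right_mem_Icc.2 hx1.le) hx1

/-- The numerator of the derivative of `potSlope`. -/
def potDefect (c x : ℝ) : ℝ :=
  potDeriv c x ^ 2 - 2 * pot c x * (2 * (1 - c * x ^ (c - 1))) +
    c / (6 * (1 - c)) * potDeriv c x ^ 3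

lemma hasDerivAt_potDefect {c x : ℝ} (hc : 0 < c) (hc1 : c < 1) (hx : 0 < x) :
    HasDerivAt (potDefect c) (4 * c * (1 - c) * x ^ (c - 1) / x * potGap c x) x := by
  have he := hasDerivAt_rpow_sub_one hx c
  have he0 : 0 < x ^ (c - 1) := rpow_pos_of_pos hx _
  have h1 : 1 - c ≠ 0 := by linarith
  have h := (((hasDerivAt_potDeriv (c := c) hx).pow 2).sub
    (((hasDerivAt_pot hc hx).const_mul 2).mul (((he.const_mul c).const_sub 1).const_mul 2))).add
    (((hasDerivAt_potDeriv (c := c) hx).pow 3).const_mul (c / (6 * (1 - c))))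
  refine (show HasDerivAt (potDefect c) _ x from h).congr_deriv ?_
  simp only [potGap, potDeriv_eq hx, Nat.cast_ofNat]
  generalize x ^ (c - 1) = e at *
  field_simp
  ring

lemma potDefect_one (c : ℝ) : potDefect c 1 = 0 := by simp [potDefect, pot_one, potDeriv]

lemma potDefect_pos {c x : ℝ} (hc : 0 < c) (hc1 : c < 1) (hx : 0 < x) (hx1 : x ≠ 1) :
    0 < potDefect c x := by
  have h1 : 0 < 1 - c := by linarith
  rcases lt_or_gt_of_ne hx1 with hlt | hgt
  · have hm : StrictAntiOn (potDefect c) (Icc x 1) := by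
      refine strictAntiOn_of_hasDerivWithinAt_neg (convex_Icc x 1)
        (fun y hy => (hasDerivAt_potDefect hc hc1
          (hx.trans_le hy.1)).continuousAt.continuousWithinAt)
        (fun y hy => (hasDerivAt_potDefect hc hc1 ?_).hasDerivWithinAt) (fun y hy => ?_) <;>
        rw [interior_Icc] at hy
      · exact hx.trans hy.1
      · have hy0 : 0 < y := hx.trans hy.1
        have he0 : 0 < y ^ (c - 1) := rpow_pos_of_pos hy0 _
        exact mul_neg_of_pos_of_neg (by positivity) (potGap_neg hc hc1 hy0 hy.2)
    simpa [potDefect_one] using hm (left_mem_Icc.2 hlt.le) (right_mem_Icc.2 hlt.le) hlt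
  · have hm : StrictMonoOn (potDefect c) (Ici 1) := by
      refine strictMonoOn_of_hasDerivWithinAt_pos (convex_Ici 1)
        (fun y hy => (hasDerivAt_potDefect hc hc1
          (zero_lt_one.trans_le (mem_Ici.1 hy))).continuousAt.continuousWithinAt)
        (fun y hy => (hasDerivAt_potDefect hc hc1 ?_).hasDerivWithinAt) (fun y hy => ?_) <;>
        rw [interior_Ici, mem_Ioi] at hy
      · linarith
      · have hy0 : 0 < y := by linarith
        have he0 : 0 < y ^ (c - 1) := rpow_pos_of_pos hy0 _
        exact mul_pos (by positivity) (potGap_pos hc hc1 hy)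
    simpa [potDefect_one] using hm self_mem_Ici hgt.le hgt

/-- The function `√V / V' + (c / (6(1-c))) √V` for `V = pot c`; the second term makes it strictly
increasing on both sides of the minimum of `V`. -/
def potSlope (c x : ℝ) : ℝ := √(pot c x) / potDeriv c x + c / (6 * (1 - c)) * √(pot c x)

lemma potDeriv_ne_zero {c x : ℝ} (hc1 : c < 1) (hx : 0 < x) (hx1 : x ≠ 1) :
    potDeriv c x ≠ 0 := by
  rcases lt_or_gt_of_ne hx1 with h | h
  · exact (potDeriv_neg hc1 hx h).ne
  · exact (potDeriv_pos hc1 h).ne'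

lemma hasDerivAt_potSlope {c x : ℝ} (hc : 0 < c) (hc1 : c < 1) (hx : 0 < x) (hx1 : x ≠ 1) :
    HasDerivAt (potSlope c) (potDefect c x / (2 * √(pot c x) * potDeriv c x ^ 2)) x := by
  have hV := pot_pos hc hc1 hx hx1
  have hD := potDeriv_ne_zero hc1 hx hx1
  have hs := (hasDerivAt_pot hc hx).sqrt hV.ne'
  have h := (hs.div (hasDerivAt_potDeriv hx) hD).add (hs.const_mul (c / (6 * (1 - c))))
  refine (show HasDerivAt (potSlope c) _ x from h).congr_deriv ?_
  have hsq := sq_sqrt hV.le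
  have hpos := sqrt_pos.2 hV
  have h1 : 1 - c ≠ 0 := by linarith
  rw [potDefect]
  generalize √(pot c x) = r at *
  rw [← hsq]
  field_simp

lemma strictMonoOn_potSlope {c : ℝ} (hc : 0 < c) (hc1 : c < 1) {s : Set ℝ} (hs : Convex ℝ s)
    (hs0 : ∀ x ∈ s, 0 < x ∧ x ≠ 1) : StrictMonoOn (potSlope c) s := by
  refine strictMonoOn_of_hasDerivWithinAt_pos hs (fun y hy => (hasDerivAt_potSlope hc hc1
    (hs0 y hy).1 (hs0 y hy).2).continuousAt.continuousWithinAt)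
    (fun y hy => (hasDerivAt_potSlope hc hc1 (hs0 y (interior_subset hy)).1
      (hs0 y (interior_subset hy)).2).hasDerivWithinAt) (fun y hy => ?_)
  obtain ⟨h0, h1⟩ := hs0 y (interior_subset hy)
  have := potDefect_pos hc hc1 h0 h1
  have := sqrt_pos.2 (pot_pos hc hc1 h0 h1)
  have := potDeriv_ne_zero hc1 h0 h1
  positivity

lemma integrableOn_inv_sqrt_mul_one_sub :
    IntegrableOn (fun s : ℝ => (√(s * (1 - s)))⁻¹) (Ioo 0 1) := by
  have h := ((Polynomial.Chebyshev.intervalIntegrable_sqrt_one_sub_sq_inv.comp_sub_right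
    1).comp_mul_left (c := 2)).const_mul 2
  norm_num at h
  rw [intervalIntegrable_iff_integrableOn_Ioo_of_le zero_le_one] at h
  refine h.congr_fun (fun s hs => ?_) measurableSet_Ioo
  have : 1 - (2 * s - 1) ^ 2 = 2 ^ 2 * (s * (1 - s)) := by ring
  simp only [this]
  rw [sqrt_mul (by norm_num), sqrt_sq (by norm_num), mul_inv]
  ring

section Sublevel

variable {V V' φ : ℝ → ℝ} {D : Set ℝ} {H h : ℝ}

lemma image_sublevel_div (hsurj : Ioo 0 H ⊆ V '' D) (hpos : ∀ x ∈ D, 0 < V x) (h0 : 0 < h)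
    (hH : h < H) : (fun x => V x / h) '' {x ∈ D | V x < h} = Ioo 0 1 := by
  ext s
  constructor
  · rintro ⟨x, ⟨hx, hxh⟩, rfl⟩
    exact ⟨div_pos (hpos x hx) h0, (div_lt_one h0).2 hxh⟩
  · rintro ⟨hs0, hs1⟩
    obtain ⟨x, hx, hxs⟩ := hsurj (show h * s ∈ Ioo 0 H from ⟨by positivity, by nlinarith⟩)
    refine ⟨x, ⟨hx, by nlinarith⟩, ?_⟩
    simp only [hxs]
    field_simp

lemma sublevel_integrand_eq (hV' : ∀ x ∈ D, V' x ≠ 0) (hpos : ∀ x ∈ D, 0 < V x) (h0 : 0 < h)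
    (hH : h < H) (hφ : ∀ x ∈ D, V x < H → φ (V x) = √(V x) / |V' x|) {x : ℝ}
    (hx : x ∈ {x ∈ D | V x < h}) :
    |V' x / h| • (φ (h * (V x / h)) * (√(V x / h * (1 - V x / h)))⁻¹) = 1 / √(h - V x) := by
  obtain ⟨hxD, hxh⟩ := hx
  have hVx := hpos x hxD
  have h1 : h * (V x / h) = V x := by field_simp
  have h2 : V x / h * (1 - V x / h) = V x * (h - V x) / h ^ 2 := by field_simp
  have h3 : 0 < √(h - V x) := sqrt_pos.2 (by linarith)
  have h4 : 0 < √(V x) := sqrt_pos.2 hVx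
  have h5 : 0 < |V' x| := abs_pos.2 (hV' x hxD)
  rw [h1, h2, hφ x hxD (hxh.trans hH), sqrt_div (by nlinarith), sqrt_sq h0.le, sqrt_mul hVx.le,
    abs_div, abs_of_pos h0, smul_eq_mul]
  field_simp

lemma measurableSet_sublevel (hD : IsOpen D) (hV : ∀ x ∈ D, HasDerivAt V (V' x) x) :
    MeasurableSet {x ∈ D | V x < h} :=
  (ContinuousOn.isOpen_inter_preimage
    (fun x hx => (hV x hx).continuousAt.continuousWithinAt) hD isOpen_Iio).measurableSet

/-- Taking the rescaled potential as the variable of integration. -/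
lemma setIntegral_sublevel (hD : IsOpen D) (hV : ∀ x ∈ D, HasDerivAt V (V' x) x)
    (hinj : InjOn V D) (hV' : ∀ x ∈ D, V' x ≠ 0) (hpos : ∀ x ∈ D, 0 < V x)
    (hsurj : Ioo 0 H ⊆ V '' D) (h0 : 0 < h) (hH : h < H)
    (hφ : ∀ x ∈ D, V x < H → φ (V x) = √(V x) / |V' x|) :
    ∫ x in {x ∈ D | V x < h}, 1 / √(h - V x) =
      ∫ s in Ioo 0 1, φ (h * s) * (√(s * (1 - s)))⁻¹ := by
  have hm := measurableSet_sublevel (h := h) hD hV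
  rw [← image_sublevel_div hsurj hpos h0 hH, integral_image_eq_integral_abs_deriv_smul hm
    (fun x hx => ((hV x hx.1).div_const h).hasDerivWithinAt)
    (fun x hx y hy hxy => hinj hx.1 hy.1 ((div_left_inj' h0.ne').1 hxy))]
  exact setIntegral_congr_fun hm fun x hx => (sublevel_integrand_eq hV' hpos h0 hH hφ hx).symm

lemma integrableOn_sublevel_iff (hD : IsOpen D) (hV : ∀ x ∈ D, HasDerivAt V (V' x) x)
    (hinj : InjOn V D) (hV' : ∀ x ∈ D, V' x ≠ 0) (hpos : ∀ x ∈ D, 0 < V x)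
    (hsurj : Ioo 0 H ⊆ V '' D) (h0 : 0 < h) (hH : h < H)
    (hφ : ∀ x ∈ D, V x < H → φ (V x) = √(V x) / |V' x|) :
    IntegrableOn (fun x => 1 / √(h - V x)) {x ∈ D | V x < h} ↔
      IntegrableOn (fun s => φ (h * s) * (√(s * (1 - s)))⁻¹) (Ioo 0 1) := by
  have hm := measurableSet_sublevel (h := h) hD hV
  rw [← image_sublevel_div hsurj hpos h0 hH, integrableOn_image_iff_integrableOn_abs_deriv_smul hm
    (fun x hx => ((hV x hx.1).div_const h).hasDerivWithinAt)
    (fun x hx y hy hxy => hinj hx.1 hy.1 ((div_left_inj' h0.ne').1 hxy))]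
  exact integrableOn_congr_fun
    (fun x hx => (sublevel_integrand_eq hV' hpos h0 hH hφ hx).symm) hm

end Sublevel

lemma integrableOn_mul_inv_sqrt {φ β : ℝ → ℝ} {H h k : ℝ} (h0 : 0 < h) (hH : h < H)
    (hβ : MonotoneOn β (Ioo 0 H)) (hφ : ∀ v ∈ Ioo 0 H, 0 ≤ φ v ∧ φ v = β v + k * √v) :
    IntegrableOn (fun s => φ (h * s) * (√(s * (1 - s)))⁻¹) (Ioo 0 1) := by
  have hmem : ∀ s ∈ Ioo (0 : ℝ) 1, h * s ∈ Ioo 0 H :=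
    fun s hs => ⟨mul_pos h0 hs.1, by nlinarith [hs.2]⟩
  have hmono : MonotoneOn (fun s => β (h * s)) (Ioo 0 1) := fun a ha b hb hab =>
    hβ (hmem a ha) (hmem b hb) (mul_le_mul_of_nonneg_left hab h0.le)
  have hmeas : AEMeasurable (fun s => φ (h * s)) (volume.restrict (Ioo 0 1)) := by
    refine AEMeasurable.congr (f := fun s => β (h * s) + k * √(h * s))
      ((aemeasurable_restrict_of_monotoneOn measurableSet_Ioo hmono).add (by fun_prop)) ?_
    filter_upwards [ae_restrict_mem measurableSet_Ioo] with s hs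
    exact (hφ _ (hmem s hs)).2.symm
  refine Integrable.bdd_mul (c := β h + |k| * √h) integrableOn_inv_sqrt_mul_one_sub
    hmeas.aestronglyMeasurable ?_
  filter_upwards [ae_restrict_mem measurableSet_Ioo] with s hs
  obtain ⟨hn, he⟩ := hφ _ (hmem s hs)
  rw [norm_of_nonneg hn, he]
  have hle : h * s ≤ h := by nlinarith [hs.2]
  have h1 := hβ (hmem s hs) ⟨h0, hH⟩ hle
  have h2 : k * √(h * s) ≤ |k| * √h :=
    mul_le_mul (le_abs_self k) (sqrt_le_sqrt hle) (sqrt_nonneg _) (abs_nonneg k)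
  linarith

lemma Ioo_subset_pot_image_Ioo {c : ℝ} (hc : 0 < c) :
    Ioo 0 (2 / (c + 1) - 1) ⊆ pot c '' Ioo 0 1 := by
  have h := intermediate_value_Ioo' zero_le_one (continuous_pot hc).continuousOn
  rwa [pot_one, pot_zero hc] at h

lemma Ioo_subset_pot_image_Ioi {c : ℝ} (hc : 0 < c) (hc1 : c < 1) :
    Ioo 0 (2 / (c + 1) - 1) ⊆ pot c '' Ioi 1 := by
  have h1 : 1 < 2 / (c + 1) := by rw [lt_div_iff₀] <;> linarith
  have hx : 1 < (2 / (c + 1)) ^ (1 / (1 - c)) := one_lt_rpow h1 (by simp [hc1])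
  have hx0 : 0 < (2 / (c + 1)) ^ (1 / (1 - c)) := by linarith
  have hH : pot c ((2 / (c + 1)) ^ (1 / (1 - c))) = 2 / (c + 1) - 1 := by
    have h2 : ((2 / (c + 1)) ^ (1 / (1 - c))) ^ (c - 1) = (2 / (c + 1))⁻¹ := by
      rw [← rpow_mul (by positivity), ← rpow_neg_one]
      congr 1
      have : 1 - c ≠ 0 := by linarith
      field_simp
      ring
    rw [pot, rpow_add_one_eq_sq_mul hx0, h2]
    field_simp
    ring
  have h := intermediate_value_Ioo hx.le (continuous_pot hc).continuousOn
  rw [pot_one, hH] at h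
  exact h.trans (image_mono Ioo_subset_Ioi_self)

/-- The slope function at the point of `D` where `pot c` takes a given value. -/
def branchSlope (c : ℝ) (D : Set ℝ) (v : ℝ) : ℝ := potSlope c (Function.invFunOn (pot c) D v)

lemma branchSlope_pot {c x : ℝ} {D : Set ℝ} (hinj : InjOn (pot c) D) (hx : x ∈ D) :
    branchSlope c D (pot c x) = potSlope c x := by
  rw [branchSlope, hinj.leftInvOn_invFunOn hx]

lemma strictAntiOn_branchSlope {c : ℝ} (hc : 0 < c) (hc1 : c < 1) :
    StrictAntiOn (branchSlope c (Ioo 0 1)) (Ioo 0 (2 / (c + 1) - 1)) := by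
  have hanti := (strictAntiOn_pot hc hc1).mono Ioo_subset_Icc_self
  intro v hv w hw hvw
  obtain ⟨x, hx, rfl⟩ := Ioo_subset_pot_image_Ioo hc hv
  obtain ⟨y, hy, rfl⟩ := Ioo_subset_pot_image_Ioo hc hw
  rw [branchSlope_pot hanti.injOn hx, branchSlope_pot hanti.injOn hy]
  exact strictMonoOn_potSlope hc hc1 (convex_Ioo 0 1) (fun z hz => ⟨hz.1, hz.2.ne⟩) hy hx
    ((hanti.lt_iff_gt hx hy).1 hvw)

lemma strictMonoOn_branchSlope {c : ℝ} (hc : 0 < c) (hc1 : c < 1) :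
    StrictMonoOn (branchSlope c (Ioi 1)) (Ioo 0 (2 / (c + 1) - 1)) := by
  have hmono := (strictMonoOn_pot hc hc1).mono Ioi_subset_Ici_self
  intro v hv w hw hvw
  obtain ⟨x, hx, rfl⟩ := Ioo_subset_pot_image_Ioi hc hc1 hv
  obtain ⟨y, hy, rfl⟩ := Ioo_subset_pot_image_Ioi hc hc1 hw
  rw [branchSlope_pot hmono.injOn hx, branchSlope_pot hmono.injOn hy]
  exact strictMonoOn_potSlope hc hc1 (convex_Ioi 1)
    (fun z hz => ⟨zero_lt_one.trans hz, (mem_Ioi.1 hz).ne'⟩) hx hy ((hmono.lt_iff_lt hx hy).1 hvw)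

/-- The contribution of `x < 1` to the period integral. -/
lemma left_sublevel {c h : ℝ} (hc : 0 < c) (hc1 : c < 1) (h0 : 0 < h)
    (hH : h < 2 / (c + 1) - 1) :
    IntegrableOn (fun x => 1 / √(h - pot c x)) {x ∈ Ioo 0 1 | pot c x < h} ∧
    IntegrableOn (fun s => (-branchSlope c (Ioo 0 1) (h * s) + c / (6 * (1 - c)) * √(h * s)) *
      (√(s * (1 - s)))⁻¹) (Ioo 0 1) ∧
    ∫ x in {x ∈ Ioo 0 1 | pot c x < h}, 1 / √(h - pot c x) =
      ∫ s in Ioo 0 1, (-branchSlope c (Ioo 0 1) (h * s) + c / (6 * (1 - c)) * √(h * s)) *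
        (√(s * (1 - s)))⁻¹ := by
  have hinj : InjOn (pot c) (Ioo 0 1) :=
    ((strictAntiOn_pot hc hc1).mono Ioo_subset_Icc_self).injOn
  have hφ : ∀ x ∈ Ioo (0 : ℝ) 1, pot c x < 2 / (c + 1) - 1 →
      -branchSlope c (Ioo 0 1) (pot c x) + c / (6 * (1 - c)) * √(pot c x) =
        √(pot c x) / |potDeriv c x| := by
    intro x hx _
    rw [branchSlope_pot hinj hx, abs_of_neg (potDeriv_neg hc1 hx.1 hx.2), potSlope, div_neg]
    ring
  have hV : ∀ x ∈ Ioo (0 : ℝ) 1, HasDerivAt (pot c) (potDeriv c x) x :=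
    fun x hx => hasDerivAt_pot hc hx.1
  have hV' : ∀ x ∈ Ioo (0 : ℝ) 1, potDeriv c x ≠ 0 := fun x hx => (potDeriv_neg hc1 hx.1 hx.2).ne
  have hpos : ∀ x ∈ Ioo (0 : ℝ) 1, 0 < pot c x := fun x hx => pot_pos hc hc1 hx.1 hx.2.ne
  have hsurj := Ioo_subset_pot_image_Ioo hc
  have hint : IntegrableOn (fun s => (-branchSlope c (Ioo 0 1) (h * s) +
      c / (6 * (1 - c)) * √(h * s)) * (√(s * (1 - s)))⁻¹) (Ioo 0 1) := by
    refine integrableOn_mul_inv_sqrt (β := fun v => -branchSlope c (Ioo 0 1) v)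
      (φ := fun v => -branchSlope c (Ioo 0 1) v + c / (6 * (1 - c)) * √v) h0 hH
      (strictAntiOn_branchSlope hc hc1).antitoneOn.neg (fun v hv => ⟨?_, rfl⟩)
    obtain ⟨x, hx, rfl⟩ := hsurj hv
    simp only [hφ x hx hv.2]
    positivity
  exact ⟨(integrableOn_sublevel_iff
      (φ := fun v => -branchSlope c (Ioo 0 1) v + c / (6 * (1 - c)) * √v)
      isOpen_Ioo hV hinj hV' hpos hsurj h0 hH hφ).2 hint, hint,
    setIntegral_sublevel
      (φ := fun v => -branchSlope c (Ioo 0 1) v + c / (6 * (1 - c)) * √v)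
      isOpen_Ioo hV hinj hV' hpos hsurj h0 hH hφ⟩

/-- The contribution of `x > 1` to the period integral. -/
lemma right_sublevel {c h : ℝ} (hc : 0 < c) (hc1 : c < 1) (h0 : 0 < h)
    (hH : h < 2 / (c + 1) - 1) :
    IntegrableOn (fun x => 1 / √(h - pot c x)) {x ∈ Ioi 1 | pot c x < h} ∧
    IntegrableOn (fun s => (branchSlope c (Ioi 1) (h * s) + -(c / (6 * (1 - c))) * √(h * s)) *
      (√(s * (1 - s)))⁻¹) (Ioo 0 1) ∧
    ∫ x in {x ∈ Ioi 1 | pot c x < h}, 1 / √(h - pot c x) =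
      ∫ s in Ioo 0 1, (branchSlope c (Ioi 1) (h * s) + -(c / (6 * (1 - c))) * √(h * s)) *
        (√(s * (1 - s)))⁻¹ := by
  have hinj : InjOn (pot c) (Ioi 1) :=
    ((strictMonoOn_pot hc hc1).mono Ioi_subset_Ici_self).injOn
  have hφ : ∀ x ∈ Ioi (1 : ℝ), pot c x < 2 / (c + 1) - 1 →
      branchSlope c (Ioi 1) (pot c x) + -(c / (6 * (1 - c))) * √(pot c x) =
        √(pot c x) / |potDeriv c x| := by
    intro x hx _
    rw [branchSlope_pot hinj hx, abs_of_pos (potDeriv_pos hc1 hx), potSlope]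
    ring
  have hV : ∀ x ∈ Ioi (1 : ℝ), HasDerivAt (pot c) (potDeriv c x) x :=
    fun x hx => hasDerivAt_pot hc (zero_lt_one.trans hx)
  have hV' : ∀ x ∈ Ioi (1 : ℝ), potDeriv c x ≠ 0 := fun x hx => (potDeriv_pos hc1 hx).ne'
  have hpos : ∀ x ∈ Ioi (1 : ℝ), 0 < pot c x :=
    fun x hx => pot_pos hc hc1 (zero_lt_one.trans hx) (mem_Ioi.1 hx).ne'
  have hsurj := Ioo_subset_pot_image_Ioi hc hc1
  have hint : IntegrableOn (fun s => (branchSlope c (Ioi 1) (h * s) +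
      -(c / (6 * (1 - c))) * √(h * s)) * (√(s * (1 - s)))⁻¹) (Ioo 0 1) := by
    refine integrableOn_mul_inv_sqrt (β := branchSlope c (Ioi 1))
      (φ := fun v => branchSlope c (Ioi 1) v + -(c / (6 * (1 - c))) * √v) h0 hH
      (strictMonoOn_branchSlope hc hc1).monotoneOn (fun v hv => ⟨?_, rfl⟩)
    obtain ⟨x, hx, rfl⟩ := hsurj hv
    simp only [hφ x hx hv.2]
    positivity
  exact ⟨(integrableOn_sublevel_iff
      (φ := fun v => branchSlope c (Ioi 1) v + -(c / (6 * (1 - c))) * √v)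
      isOpen_Ioi hV hinj hV' hpos hsurj h0 hH hφ).2 hint, hint,
    setIntegral_sublevel
      (φ := fun v => branchSlope c (Ioi 1) v + -(c / (6 * (1 - c))) * √v)
      isOpen_Ioi hV hinj hV' hpos hsurj h0 hH hφ⟩

/-- The half-period of the motion of energy `h` in the potential `pot c`, up to a constant. -/
def potPeriod (c h : ℝ) : ℝ := ∫ x in {x | 0 < x ∧ pot c x < h}, 1 / √(h - pot c x)

lemma potPeriod_eq {c h : ℝ} (hc : 0 < c) (hc1 : c < 1) (h0 : 0 < h)
    (hH : h < 2 / (c + 1) - 1) :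
    IntegrableOn (fun s => (branchSlope c (Ioi 1) (h * s) - branchSlope c (Ioo 0 1) (h * s)) *
      (√(s * (1 - s)))⁻¹) (Ioo 0 1) ∧
    potPeriod c h = ∫ s in Ioo 0 1,
      (branchSlope c (Ioi 1) (h * s) - branchSlope c (Ioo 0 1) (h * s)) *
        (√(s * (1 - s)))⁻¹ := by
  obtain ⟨hl1, hl2, hl3⟩ := left_sublevel hc hc1 h0 hH
  obtain ⟨hr1, hr2, hr3⟩ := right_sublevel hc hc1 h0 hH
  have heq : ∀ s : ℝ, (branchSlope c (Ioi 1) (h * s) - branchSlope c (Ioo 0 1) (h * s)) *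
      (√(s * (1 - s)))⁻¹ =
      (-branchSlope c (Ioo 0 1) (h * s) + c / (6 * (1 - c)) * √(h * s)) * (√(s * (1 - s)))⁻¹ +
      (branchSlope c (Ioi 1) (h * s) + -(c / (6 * (1 - c))) * √(h * s)) * (√(s * (1 - s)))⁻¹ :=
    fun s => by ring
  simp only [heq]
  refine ⟨hl2.add hr2, ?_⟩
  rw [integral_add hl2 hr2, ← hl3, ← hr3, ← setIntegral_union _ _ hl1 hr1, potPeriod]
  · refine setIntegral_congr_set ?_
    have hset : {x ∈ Ioo 0 1 | pot c x < h} ∪ {x ∈ Ioi 1 | pot c x < h} =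
        {x | 0 < x ∧ pot c x < h} \ {1} := by
      ext x
      simp only [mem_union, mem_ofPred_eq, mem_Ioo, mem_Ioi, mem_sdiff, mem_singleton_iff]
      constructor
      · rintro (⟨⟨a, b⟩, d⟩ | ⟨a, b⟩)
        · exact ⟨⟨a, d⟩, b.ne⟩
        · exact ⟨⟨zero_lt_one.trans a, b⟩, a.ne'⟩
      · rintro ⟨⟨a, b⟩, d⟩
        rcases lt_or_gt_of_ne d with e | e
        · exact Or.inl ⟨⟨a, e⟩, b⟩
        · exact Or.inr ⟨e, b⟩
    rw [hset]
    exact (sdiff_null_ae_eq_self (by simp)).symm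
  · exact disjoint_left.2 fun x hx hx' => hx.1.2.not_gt hx'.1
  · exact measurableSet_sublevel isOpen_Ioi fun x hx => hasDerivAt_pot hc (zero_lt_one.trans hx)

lemma strictMonoOn_potPeriod {c : ℝ} (hc : 0 < c) (hc1 : c < 1) :
    StrictMonoOn (potPeriod c) (Ioo 0 (2 / (c + 1) - 1)) := by
  intro h hh k hk hlt
  obtain ⟨hi, he⟩ := potPeriod_eq hc hc1 hh.1 hh.2
  obtain ⟨ki, ke⟩ := potPeriod_eq hc hc1 hk.1 hk.2
  rw [he, ke, ← sub_pos, ← integral_sub ki hi, ← integral_Ioc_eq_integral_Ioo,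
    ← intervalIntegral.integral_of_le zero_le_one]
  refine intervalIntegral.intervalIntegral_pos_of_pos_on
    ((intervalIntegrable_iff_integrableOn_Ioo_of_le zero_le_one).2 (ki.sub hi))
    (fun s hs => ?_) zero_lt_one
  have hhs : h * s ∈ Ioo 0 (2 / (c + 1) - 1) :=
    ⟨mul_pos hh.1 hs.1, by nlinarith [hs.2, hh.1, hh.2]⟩
  have hks : k * s ∈ Ioo 0 (2 / (c + 1) - 1) :=
    ⟨mul_pos hk.1 hs.1, by nlinarith [hs.2, hk.1, hk.2]⟩
  have hlts := mul_lt_mul_of_pos_right hlt hs.1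
  have h1 := strictMonoOn_branchSlope hc hc1 hhs hks hlts
  have h2 := strictAntiOn_branchSlope hc hc1 hhs hks hlts
  have h3 : 0 < (√(s * (1 - s)))⁻¹ :=
    inv_pos.2 (sqrt_pos.2 (mul_pos hs.1 (by linarith [hs.2])))
  rw [← sub_mul]
  exact mul_pos (by linarith) h3

lemma ordConnected_pot_lt {c : ℝ} (hc : 0 < c) (hc1 : c < 1) (h : ℝ) :
    OrdConnected {x | 0 < x ∧ pot c x < h} := by
  refine ⟨fun x hx y hy z hz => ⟨hx.1.trans_le hz.1, ?_⟩⟩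
  rcases le_total z 1 with h1 | h1
  · exact ((strictAntiOn_pot hc hc1).antitoneOn ⟨hx.1.le, hz.1.trans h1⟩
      ⟨hx.1.le.trans hz.1, h1⟩ hz.1).trans_lt hx.2
  · exact ((strictMonoOn_pot hc hc1).monotoneOn h1 (h1.trans hz.2) hz.2).trans_lt hy.2

lemma bddAbove_pot_lt {c h : ℝ} (hc : 0 < c) (hc1 : c < 1) (h0 : 0 < h)
    (hH : h < 2 / (c + 1) - 1) : BddAbove {x | 0 < x ∧ pot c x < h} := by
  obtain ⟨b, hb, hbh⟩ := Ioo_subset_pot_image_Ioi hc hc1 ⟨h0, hH⟩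
  refine ⟨b, fun x hx => ?_⟩
  by_contra! hlt
  have := strictMonoOn_pot hc hc1 (mem_Ioi.1 hb).le ((mem_Ioi.1 hb).le.trans hlt.le) hlt
  linarith [hx.2]

/-- The unit of length in which `f_α` becomes an energy minus a potential. -/
def lengthScale (γ α : ℝ) : ℝ := (α * γ) ^ (1 / (2 * (1 - γ)))

/-- The energy of the rescaled problem. -/
def energy (γ α : ℝ) : ℝ := (1 / γ - 1) - 1 / lengthScale γ α ^ 2

lemma fA_lengthScale_mul {γ α x : ℝ} (hγ : 1 / 2 < γ) (hγ1 : γ < 1) (hα : 0 < α) (hx : 0 < x) :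
    fA γ α (lengthScale γ α * x) =
      lengthScale γ α ^ 2 * (energy γ α - pot (2 * γ - 1) x) := by
  have hb : 0 < α * γ := by nlinarith
  have hl : 0 < lengthScale γ α := rpow_pos_of_pos hb _
  have h1 : lengthScale γ α ^ (2 - 2 * γ) = α * γ := by
    rw [lengthScale, ← rpow_mul hb.le]
    have : 1 - γ ≠ 0 := by linarith
    rw [show 1 / (2 * (1 - γ)) * (2 - 2 * γ) = 1 by field_simp, rpow_one]
  have h2 : α * lengthScale γ α ^ (2 * γ) = lengthScale γ α ^ 2 / γ := by
    have h3 : lengthScale γ α ^ (2 : ℝ) =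
        lengthScale γ α ^ (2 * γ) * lengthScale γ α ^ (2 - 2 * γ) := by
      rw [← rpow_add hl]; congr 1; ring
    rw [h1, rpow_two] at h3
    rw [h3]; field_simp
  rw [fA, mul_rpow hl.le hx.le, energy, pot, ← mul_assoc, h2]
  simp only [sub_add_cancel]
  field_simp
  ring

lemma energy_mem {γ α : ℝ} (hγ : 1 / 2 < γ) (hγ1 : γ < 1)
    (hα : γ ^ (-γ) * (1 - γ) ^ (γ - 1) < α) :
    energy γ α ∈ Ioo 0 (2 / (2 * γ - 1 + 1) - 1) := by
  have hg : 0 < γ := by linarith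
  have h1g : 0 < 1 - γ := by linarith
  have hα0 : 0 < α := lt_trans (by positivity) hα
  have hb : 0 < α * γ := by positivity
  have hl : 0 < lengthScale γ α := rpow_pos_of_pos hb _
  have hlt : (γ / (1 - γ)) ^ (1 - γ) < α * γ := by
    have : (γ / (1 - γ)) ^ (1 - γ) = γ ^ (-γ) * (1 - γ) ^ (γ - 1) * γ := by
      rw [div_rpow hg.le h1g.le, show γ - 1 = -(1 - γ) by ring, rpow_neg h1g.le,
        show (1 - γ) = -γ + 1 by ring, rpow_add_one hg.ne']
      field_simp
    rw [this]
    gcongr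
  have hsq : lengthScale γ α ^ 2 = (α * γ) ^ (1 / (1 - γ)) := by
    rw [lengthScale, ← rpow_natCast, ← rpow_mul hb.le]
    congr 1
    push_cast
    field_simp
  have hsq' : γ / (1 - γ) < lengthScale γ α ^ 2 := by
    have := rpow_lt_rpow (by positivity) hlt (by positivity : 0 < 1 / (1 - γ))
    rwa [← rpow_mul (by positivity), mul_one_div_cancel h1g.ne', rpow_one, ← hsq] at this
  constructor
  · rw [energy, sub_pos, one_div_lt (by positivity) (by rw [sub_pos, lt_div_iff₀ hg]; linarith)]
    refine lt_of_eq_of_lt ?_ hsq'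
    field_simp
  · rw [energy, sub_add_cancel, show 2 / (2 * γ) = 1 / γ by field_simp]
    have : 0 < 1 / lengthScale γ α ^ 2 := by positivity
    linarith

lemma strictMonoOn_energy {γ : ℝ} (hγ : 1 / 2 < γ) (hγ1 : γ < 1) :
    StrictMonoOn (energy γ) (Ioi 0) := by
  intro a ha b hb hab
  have hg : 0 < γ := by linarith
  have h1g : 0 < 1 - γ := by linarith
  have ha' : 0 < a * γ := mul_pos ha hg
  have hl : 0 < lengthScale γ a := rpow_pos_of_pos ha' _
  have hlt : lengthScale γ a < lengthScale γ b :=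
    rpow_lt_rpow ha'.le (by gcongr) (by positivity)
  unfold energy
  gcongr

lemma I0_eq_potPeriod {γ α : ℝ} (hγ : 1 / 2 < γ) (hγ1 : γ < 1)
    (hα : γ ^ (-γ) * (1 - γ) ^ (γ - 1) < α) :
    I0 γ α = potPeriod (2 * γ - 1) (energy γ α) := by
  have hc : 0 < 2 * γ - 1 := by linarith
  have hc1 : 2 * γ - 1 < 1 := by linarith
  have hg : 0 < γ := by linarith
  have h1g : 0 < 1 - γ := by linarith
  have hα0 : 0 < α := lt_trans (by positivity) hα
  have hl : 0 < lengthScale γ α := rpow_pos_of_pos (by positivity) _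
  obtain ⟨h0, hH⟩ := energy_mem hγ hγ1 hα
  have himg : (fun x => lengthScale γ α * x) '' {x | 0 < x ∧ pot (2 * γ - 1) x < energy γ α} =
      {t | 0 < t ∧ 0 < fA γ α t} := by
    ext t
    constructor
    · rintro ⟨x, ⟨hx, hxh⟩, rfl⟩
      refine ⟨mul_pos hl hx, ?_⟩
      rw [fA_lengthScale_mul hγ hγ1 hα0 hx]
      exact mul_pos (by positivity) (by linarith)
    · rintro ⟨ht, hft⟩
      have hx : 0 < t / lengthScale γ α := by positivity
      have hlt : lengthScale γ α * (t / lengthScale γ α) = t := by field_simp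
      rw [← hlt, fA_lengthScale_mul hγ hγ1 hα0 hx] at hft
      exact ⟨t / lengthScale γ α, ⟨hx, sub_pos.1 (pos_of_mul_pos_right hft (by positivity))⟩, hlt⟩
  have hoc := ordConnected_pot_lt hc hc1 (energy γ α)
  have hne : {x | 0 < x ∧ pot (2 * γ - 1) x < energy γ α}.Nonempty :=
    ⟨1, one_pos, by rwa [pot_one]⟩
  have hconn : IsConnected {t | 0 < t ∧ 0 < fA γ α t} := by
    rw [← himg]
    exact IsConnected.image ⟨hne, hoc.isPreconnected⟩ _ (by fun_prop)
  have hba : BddAbove {t | 0 < t ∧ 0 < fA γ α t} := by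
    rw [← himg]
    exact (monotone_mul_left_of_nonneg hl.le).map_bddAbove (bddAbove_pot_lt hc hc1 h0 hH)
  have hbb : BddBelow {t | 0 < t ∧ 0 < fA γ α t} := ⟨0, fun t ht => ht.1.le⟩
  have hsub := hconn.Ioo_csInf_csSup_subset hbb hba
  have hsup := subset_Icc_csInf_csSup hbb hba
  rw [I0, omegaMinus, omegaPlus, intervalIntegral.integral_of_le
    (csInf_le_csSup hconn.nonempty hbb hba), integral_Ioc_eq_integral_Ioo,
    setIntegral_congr_set (t := {t | 0 < t ∧ 0 < fA γ α t})
      (hsub.eventuallyLE.antisymm (hsup.eventuallyLE.trans Ioo_ae_eq_Icc.symm.le)),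
    ← himg, integral_image_eq_integral_abs_deriv_smul (f := fun x => lengthScale γ α * x) hoc.measurableSet
      (fun x _ => ((hasDerivAt_id x).const_mul (lengthScale γ α)).hasDerivWithinAt)
      (mul_right_injective₀ hl.ne').injOn, potPeriod]
  refine setIntegral_congr_fun hoc.measurableSet fun x hx => ?_
  have hE : 0 < √(energy γ α - pot (2 * γ - 1) x) := sqrt_pos.2 (by linarith [hx.2])
  rw [fA_lengthScale_mul hγ hγ1 hα0 hx.1, sqrt_mul (by positivity), sqrt_sq hl.le, mul_one,
    abs_of_pos hl, smul_eq_mul]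
  field_simp

/-- For `γ = 1 − 2π⁻²`, the function `I₀` is strictly increasing on
`(γ^{−γ}(1−γ)^{γ−1}, ∞)`. -/
theorem I0_strictMono (γ : ℝ) (hγ : γ = 1 - 2 / π ^ 2) :
    StrictMonoOn (I0 γ) (Ioi (γ ^ (-γ) * (1 - γ) ^ (γ - 1))) := by
  have hπ : 2 / π ^ 2 < 1 / 2 := by
    rw [div_lt_div_iff₀ (by positivity) (by norm_num)]
    nlinarith [pi_gt_three]
  have hγ2 : 1 / 2 < γ := by linarith
  have hγ1 : γ < 1 := by
    have : 0 < 2 / π ^ 2 := by positivity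
    linarith
  have hthr : 0 < γ ^ (-γ) * (1 - γ) ^ (γ - 1) :=
    mul_pos (rpow_pos_of_pos (by linarith) _) (rpow_pos_of_pos (by linarith) _)
  intro a ha b hb hab
  rw [I0_eq_potPeriod hγ2 hγ1 ha, I0_eq_potPeriod hγ2 hγ1 hb]
  exact strictMonoOn_potPeriod (by linarith) (by linarith) (energy_mem hγ2 hγ1 ha)
    (energy_mem hγ2 hγ1 hb)
    (strictMonoOn_energy hγ2 hγ1 (hthr.trans ha) (hthr.trans hb) hab)
end
end
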